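/- arXiv:1405.6866 — 3 statements merged into one kernel-verified Lean document; each statement's English description precedes it below -/
import Mathlib

section
/- Let X be a separable metrizable space. Then X is countable dimensional if and only if X is NOT 0-avoiding, i.e., no countable set F of partial continuous real-valued functions on X avoids the class of all partial continuous functions from ℝ to ℝ. -/
/-!
**From countable dimensional to not 0-avoiding.** Each zero-dimensional piece `A n` embeds in `ℝ`
through the Cantor set by some `g n`. For every countable `F`, the countable families of all `g n`
and all `f ∘ (g n)⁻¹` with `f ∈ F` witness that `F` does not avoid
(`not_zeroAvoiding_of_countableDimensional`).

**From not 0-avoiding to countable dimensional.** Let `F` consist of functions `u j`, rescaled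
distances to the points of a dense sequence, such that every neighbourhood of `x` contains some
`{u j < 1}` with `u j x < 0`. Since `F` does not avoid, `X` is a countable union of pieces `A`
carrying a continuous `g : A → ℝ` with `u j x ∈ {h (g x) : h ∈ H}` for all `j` and `x ∈ A`, where
`H` is a fixed countable set. Splitting further, `g` is constant or takes irrational values only,
so that `g` pulls the rational intervals back to clopen sets.

On such a piece, diagonalization against `H` in the digits of the Cantor set produces continuous
`ρ t : A → [0, 1]` such that, for each `j` and `x`, the functions `u j` and `ρ t` differ near `x`
for all large `t` (`exists_thresholds`). Where `u 0, …, u j` all differ from `ρ t`, the sets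
`{u i < ρ t}` with `i ≤ j` are relatively clopen and can be made disjoint by taking the first one
that contains a given point. Patching different values of `t` along the level bands of a continuous
function shows that every open cover of `A` has an open refinement made of two disjoint families
(`exists_refinement`).

Iterating, one gets a tree of locally finite closed covers of order at most two that become
arbitrarily fine. The number of members of level `m` on an infinite branch through `x` (a branch
all of whose members contain `x`) is nondecreasing in `m` and at most two, hence eventually
constant. On the set of points where it is `k` from level `m` on, prescribing the members gives
small clopen sets, so `A` is a countable union of zero-dimensional sets
(`countableDimensional_of_tree`).
-/

open Set

/-- A partial continuous map from `X` to `Y`: a continuous map defined on a subspace of `X`. -/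
structure PartialContMap (X Y : Type*) [TopologicalSpace X] [TopologicalSpace Y] where
  dom : Set X
  toFun : dom → Y
  cont : Continuous toFun

/-- A countable `F ⊆ C(⊆X, ℝ)` avoids the class of all partial continuous functions from
`ℝ` to `ℝ`: for every countable `G ⊆ C(⊆X, ℝ)` and every countable set `H` of partial
continuous functions from `ℝ` to `ℝ` there is `x ∈ X` such that for every `g ∈ G` with
`x ∈ dom g` there is `f ∈ F` with `x ∈ dom f` and `f x ≠ h (g x)` for all `h ∈ H` with
`g x ∈ dom h`. -/
def Avoids {X : Type*} [TopologicalSpace X] (F : Set (PartialContMap X ℝ)) : Prop :=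
  ∀ G : Set (PartialContMap X ℝ), G.Countable →
  ∀ H : Set (PartialContMap ℝ ℝ), H.Countable →
  ∃ x : X, ∀ g ∈ G, ∀ hgx : x ∈ g.dom,
    ∃ f ∈ F, ∃ hfx : x ∈ f.dom,
      ∀ h ∈ H, ∀ hh : g.toFun ⟨x, hgx⟩ ∈ h.dom,
        f.toFun ⟨x, hfx⟩ ≠ h.toFun ⟨g.toFun ⟨x, hgx⟩, hh⟩

/-- `X` is 0-avoiding: some countable set of partial continuous real-valued functions on `X`
avoids the class of all partial continuous functions from `ℝ` to `ℝ`. -/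
def ZeroAvoiding (X : Type*) [TopologicalSpace X] : Prop :=
  ∃ F : Set (PartialContMap X ℝ), F.Countable ∧ Avoids F

/-- `X` is countable dimensional: `X` is a countable union of zero-dimensional subspaces
(subspaces whose topology has a basis of clopen sets). -/
def CountableDimensional (X : Type*) [TopologicalSpace X] : Prop :=
  ∃ A : ℕ → Set X, (⋃ n, A n) = univ ∧
    ∀ n, ∃ B : Set (Set ↥(A n)),
      TopologicalSpace.IsTopologicalBasis B ∧ ∀ s ∈ B, IsClopen s

open TopologicalSpace Topology Filter

/-! ### Zero-dimensional subspaces -/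

lemma clopenBasis_iff {Y : Type*} [TopologicalSpace Y] :
    (∃ B : Set (Set Y), IsTopologicalBasis B ∧ ∀ s ∈ B, IsClopen s) ↔
      ∀ (x : Y) (U : Set Y), IsOpen U → x ∈ U → ∃ V, IsClopen V ∧ x ∈ V ∧ V ⊆ U := by
  constructor
  · rintro ⟨B, hB, hc⟩ x U hU hx
    obtain ⟨V, hV, hxV, hVU⟩ := hB.exists_subset_of_mem_open hx hU
    exact ⟨V, hc V hV, hxV, hVU⟩
  · intro h
    refine ⟨{s | IsClopen s}, isTopologicalBasis_of_isOpen_of_nhds (fun s hs => hs.2) ?_,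
      fun s hs => hs⟩
    intro x U hx hU
    obtain ⟨V, hV, hxV, hVU⟩ := h x U hU hx
    exact ⟨V, hV, hxV, hVU⟩

lemma countableDimensional_of_countable {X ι : Type*} [TopologicalSpace X] [Countable ι]
    (A : ι → Set X) (hA : ∀ x, ∃ i, x ∈ A i)
    (h : ∀ i, ∃ B : Set (Set ↥(A i)), IsTopologicalBasis B ∧ ∀ s ∈ B, IsClopen s) :
    CountableDimensional X := by
  rcases isEmpty_or_nonempty ι with hι | hι
  · have hX : IsEmpty X := ⟨fun x => (hA x).elim fun i _ => hι.elim i⟩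
    refine ⟨fun _ => ∅, by ext x; exact hX.elim x, fun n => clopenBasis_iff.2 ?_⟩
    intro x
    exact x.2.elim
  · obtain ⟨e, he⟩ := exists_surjective_nat ι
    refine ⟨fun n => A (e n), ?_, fun n => h (e n)⟩
    refine eq_univ_of_forall fun x => ?_
    obtain ⟨i, hi⟩ := hA x
    obtain ⟨n, rfl⟩ := he i
    exact mem_iUnion.2 ⟨n, hi⟩

/-- A countable union of countable dimensional subspaces is countable dimensional. -/
lemma countableDimensional_of_pieces {X ι : Type*} [TopologicalSpace X] [Countable ι]
    (A : ι → Set X) (hA : ∀ x, ∃ i, x ∈ A i)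
    (h : ∀ i, CountableDimensional ↥(A i)) : CountableDimensional X := by
  choose S hS hB using h
  refine countableDimensional_of_countable (ι := ι × ℕ)
    (fun p => Subtype.val '' (S p.1 p.2)) ?_ ?_
  · intro x
    obtain ⟨i, hi⟩ := hA x
    have : (⟨x, hi⟩ : A i) ∈ ⋃ n, S i n := by rw [hS]; trivial
    obtain ⟨n, hn⟩ := mem_iUnion.1 this
    exact ⟨(i, n), _, hn, rfl⟩
  · rintro ⟨i, n⟩
    have key := clopenBasis_iff.1 (hB i n)
    let e : S i n ≃ₜ (Subtype.val '' (S i n) : Set X) :=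
      Topology.IsEmbedding.subtypeVal.homeomorphImage (S i n)
    refine clopenBasis_iff.2 fun x U hU hx => ?_
    obtain ⟨V, hV, hxV, hVU⟩ := key (e.symm x) (e ⁻¹' U) (hU.preimage e.continuous) (by simpa)
    refine ⟨e.symm ⁻¹' V, hV.preimage e.symm.continuous, hxV, fun z hz => ?_⟩
    have := hVU hz
    simpa using this

/-! ### Countable dimensional spaces are not 0-avoiding -/

/-- The Cantor space, embedded in `[0, 1]` through the ternary Cantor set. -/
noncomputable def cantorEmb (b : ℕ → Bool) : ℝ := (cantorSetHomeomorphNatToBool.symm b : ℝ)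

lemma isEmbedding_cantorEmb : IsEmbedding cantorEmb :=
  IsEmbedding.subtypeVal.comp cantorSetHomeomorphNatToBool.symm.isEmbedding

lemma cantorEmb_mem (b : ℕ → Bool) : cantorEmb b ∈ Icc (0 : ℝ) 1 :=
  cantorSet_subset_unitInterval (cantorSetHomeomorphNatToBool.symm b).2

open Classical in
/-- A zero-dimensional separable metrizable space embeds in `ℝ`, through the Cantor set. -/
lemma exists_embedding_real {Y : Type*} [TopologicalSpace Y] [T0Space Y]
    [SecondCountableTopology Y]
    (h : ∃ B : Set (Set Y), IsTopologicalBasis B ∧ ∀ s ∈ B, IsClopen s) :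
    ∃ g : Y → ℝ, IsEmbedding g := by
  obtain ⟨B, hB, hc⟩ := h
  obtain ⟨B', hB'B, hB'c, hB'⟩ := hB.exists_countable
  obtain ⟨U, hU⟩ : ∃ U : ℕ → Set Y, insert ∅ B' = range U :=
    (hB'c.insert ∅).exists_eq_range (insert_nonempty _ _)
  have hUc : ∀ n, IsClopen (U n) := by
    intro n
    have : U n ∈ insert ∅ B' := hU ▸ mem_range_self n
    rcases this with h0 | h1
    · rw [h0]; exact isClopen_empty
    · exact hc _ (hB'B h1)
  let φ : Y → ℕ → Bool := fun y n => decide (y ∈ U n)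
  have hφ : Continuous φ := by
    refine continuous_pi fun n => ?_
    exact (continuous_boolIndicator_iff_isClopen (U n)).2 (hUc n) |>.congr fun y => by
      by_cases hy : y ∈ U n <;> simp [boolIndicator, φ, hy]
  have hind : IsInducing φ := by
    refine isInducing_iff_nhds.2 fun y => le_antisymm hφ.continuousAt.le_comap ?_
    intro s hs
    obtain ⟨V, hV, hyV, hVs⟩ := hB'.mem_nhds_iff.1 hs
    obtain ⟨n, rfl⟩ : V ∈ range U := hU ▸ mem_insert_of_mem _ hV
    refine ⟨{b | b n = true}, ?_, fun z hz => hVs (by simpa [φ] using hz)⟩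
    have ho : IsOpen {b : ℕ → Bool | b n = true} :=
      (isOpen_discrete ({true} : Set Bool)).preimage
        (continuous_apply n : Continuous fun b : ℕ → Bool => b n)
    exact ho.mem_nhds (by simpa [φ] using hyV)
  exact ⟨_, isEmbedding_cantorEmb.comp hind.isEmbedding⟩

lemma not_zeroAvoiding_of_countableDimensional {X : Type*} [TopologicalSpace X] [T0Space X]
    [SecondCountableTopology X] (hX : CountableDimensional X) : ¬ ZeroAvoiding X := by
  rintro ⟨F, hF, hav⟩
  obtain ⟨A, hA, hB⟩ := hX
  choose g hg using fun n => exists_embedding_real (hB n)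
  have inv : ∀ n, Continuous fun y : range (g n) => (hg n).toHomeomorph.symm y :=
    fun n => (hg n).toHomeomorph.symm.continuous
  let G : ℕ → PartialContMap X ℝ := fun n => ⟨A n, g n, (hg n).continuous⟩
  -- `f ∘ (g n)⁻¹`, defined on the image under `g n` of `A n ∩ dom f`
  let H : ℕ × F → PartialContMap ℝ ℝ := fun p =>
    { dom := {y | ∃ hy : y ∈ range (g p.1), ((hg p.1).toHomeomorph.symm ⟨y, hy⟩ : X) ∈ p.2.1.dom}
      toFun := fun y => p.2.1.toFun
        ⟨((hg p.1).toHomeomorph.symm ⟨y.1, y.2.choose⟩ : X), y.2.choose_spec⟩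
      cont := by
        refine p.2.1.cont.comp (Continuous.subtype_mk (continuous_subtype_val.comp ?_) _)
        exact (inv p.1).comp (Continuous.subtype_mk continuous_subtype_val _) }
  have : Countable F := hF
  obtain ⟨x, hx⟩ := hav (range G) (countable_range G) (range H) (countable_range H)
  obtain ⟨n, hn⟩ := mem_iUnion.1 (hA ▸ mem_univ x : x ∈ ⋃ n, A n)
  obtain ⟨f, hf, hfx, hne⟩ := hx (G n) (mem_range_self n) hn
  have hinv : (hg n).toHomeomorph.symm ⟨g n ⟨x, hn⟩, mem_range_self _⟩ = ⟨x, hn⟩ :=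
    (hg n).toHomeomorph.symm_apply_apply ⟨x, hn⟩
  refine hne (H (n, ⟨f, hf⟩)) (mem_range_self _) ⟨mem_range_self _, ?_⟩ ?_
  · change ((hg n).toHomeomorph.symm ⟨g n ⟨x, hn⟩, mem_range_self _⟩ : X) ∈ f.dom
    rw [hinv]
    exact hfx
  · simp only [H]
    congr 1
    exact Subtype.ext (congrArg Subtype.val hinv).symm

/-! ### Trees of closed covers -/

/-- For a tree of covers `F m` with parent maps `π m : level m + 1 → level m`, the set of points of
the member `j` of level `m` that lie in some descendant of `j` exactly `l` levels further. -/
def descUnion {A ι : Type*} (F : ℕ → ι → Set A) (π : ℕ → ι → ι) : ℕ → ℕ → ι → Set A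
  | 0, m, j => F m j
  | l + 1, m, j => ⋃ k : {k // π m k = j}, descUnion F π l (m + 1) k

section Tree

variable {A ι : Type*} {F : ℕ → ι → Set A} {π : ℕ → ι → ι}

lemma descUnion_subset (hπ : ∀ m i, F (m + 1) i ⊆ F m (π m i)) (l m : ℕ) (j : ι) :
    descUnion F π l m j ⊆ F m j := by
  induction l generalizing m j with
  | zero => exact subset_rfl
  | succ l ih =>
    refine iUnion_subset fun k => ?_
    obtain ⟨k, rfl⟩ := k
    exact (ih (m + 1) k).trans (hπ m k)

lemma descUnion_antitone (hπ : ∀ m i, F (m + 1) i ⊆ F m (π m i)) (m : ℕ) (j : ι) :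
    Antitone fun l => descUnion F π l m j := by
  refine antitone_nat_of_succ_le fun l => ?_
  induction l generalizing m j with
  | zero => exact descUnion_subset hπ 1 m j
  | succ l ih => exact iUnion_mono fun k => ih (m + 1) k

lemma isClosed_descUnion [TopologicalSpace A] (hF : ∀ m i, IsClosed (F m i))
    (lf : ∀ m, LocallyFinite (F m)) (hπ : ∀ m i, F (m + 1) i ⊆ F m (π m i)) (l m : ℕ) (j : ι) :
    IsClosed (descUnion F π l m j) := by
  induction l generalizing m j with
  | zero => exact hF m j
  | succ l ih =>
    refine LocallyFinite.isClosed_iUnion ?_ fun k => ih (m + 1) k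
    exact ((lf (m + 1)).comp_injective Subtype.val_injective).subset
      fun k => descUnion_subset hπ l (m + 1) k

lemma exists_mem_descUnion (cov : ∀ m x, ∃ i, x ∈ F m i) (l m : ℕ) (x : A) :
    ∃ j, x ∈ descUnion F π l m j := by
  induction l generalizing m with
  | zero => exact cov m x
  | succ l ih =>
    obtain ⟨k, hk⟩ := ih (m + 1)
    exact ⟨π m k, mem_iUnion.2 ⟨⟨k, rfl⟩, hk⟩⟩

/-- König's lemma for the finite set of members of level `m` that contain `x`. -/
lemma exists_forall_mem_descUnion (hπ : ∀ m i, F (m + 1) i ⊆ F m (π m i)) (m : ℕ) (x : A)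
    (fin : {i | x ∈ F m i}.Finite) (K : Set ι) (h : ∀ l, ∃ k ∈ K, x ∈ descUnion F π l m k) :
    ∃ k ∈ K, ∀ l, x ∈ descUnion F π l m k := by
  by_contra! hcon
  have : ∀ k, ∃ l, k ∈ K → x ∉ descUnion F π l m k := by
    intro k
    by_cases hk : k ∈ K
    · obtain ⟨l, hl⟩ := hcon k hk
      exact ⟨l, fun _ => hl⟩
    · exact ⟨0, fun h => (hk h).elim⟩
  choose ℓ hℓ using this
  obtain ⟨k, hkK, hk⟩ := h (fin.toFinset.sup ℓ)
  have hkF : k ∈ fin.toFinset := by simpa using descUnion_subset hπ _ _ _ hk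
  exact hℓ k hkK (descUnion_antitone hπ m k (Finset.le_sup hkF) hk)

/-- The set of points of the member `j` of level `m` that lie in descendants of `j` at every depth.
If the levels are point finite, these are the points lying in all members of some infinite branch
through `j`. -/
def branchSet (F : ℕ → ι → Set A) (π : ℕ → ι → ι) (m : ℕ) (j : ι) : Set A :=
  ⋂ l, descUnion F π l m j

lemma branchSet_subset (m : ℕ) (j : ι) : branchSet F π m j ⊆ F m j :=
  iInter_subset (fun l => descUnion F π l m j) 0

lemma exists_child_mem_branchSet (hπ : ∀ m i, F (m + 1) i ⊆ F m (π m i)) {m : ℕ} {x : A}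
    (fin : {i | x ∈ F (m + 1) i}.Finite) {j : ι} (hx : x ∈ branchSet F π m j) :
    ∃ k, π m k = j ∧ x ∈ branchSet F π (m + 1) k := by
  obtain ⟨k, hk, h⟩ := exists_forall_mem_descUnion hπ (m + 1) x fin {k | π m k = j} fun l => by
    obtain ⟨k, hk⟩ := mem_iUnion.1 (mem_iInter.1 hx (l + 1))
    exact ⟨k, k.2, hk⟩
  exact ⟨k, hk, mem_iInter.2 h⟩

end Tree

lemma exists_eventually_const (N : ℕ → ℕ) (hN : Monotone N) (c : ℕ) (hc : ∀ m, N m ≤ c) :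
    ∃ k m, ∀ l, m ≤ l → N l = k := by
  have hb : BddAbove (range N) := ⟨c, by rintro _ ⟨m, rfl⟩; exact hc m⟩
  obtain ⟨m, hm⟩ := Nat.sSup_mem (range_nonempty N) hb
  exact ⟨sSup (range N), m, fun l hl =>
    le_antisymm (le_csSup hb (mem_range_self l)) (hm ▸ hN hl)⟩

/-- A tree of locally finite closed covers of order at most two, whose levels become arbitrarily
fine, makes the space countable dimensional. Indeed the number of members of level `m` lying on an
infinite branch through `x` is nondecreasing in `m` and at most two, hence eventually constant; on
the set where it is equal to `k` from level `m` on, the sets of points having a prescribed set of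
such members are clopen. -/
lemma countableDimensional_of_tree {A ι : Type*} [TopologicalSpace A] (u : ℕ → A → ℝ)
    (hu : ∀ x O, IsOpen O → x ∈ O → ∃ j, u j x < 0 ∧ ∀ z, u j z < 1 → z ∈ O)
    (color : ι → Bool) (F : ℕ → ι → Set A) (π : ℕ → ι → ι)
    (hF : ∀ m i, IsClosed (F m i)) (lf : ∀ m, LocallyFinite (F m))
    (cov : ∀ m x, ∃ i, x ∈ F m i)
    (col : ∀ m x i i', x ∈ F m i → x ∈ F m i' → color i = color i' → i = i')
    (hπ : ∀ m i, F (m + 1) i ⊆ F m (π m i))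
    (small : ∀ m i, (∀ x ∈ F (m + 1) i, u m.unpair.1 x < 1) ∨
      (∀ x ∈ F (m + 1) i, 0 < u m.unpair.1 x)) :
    CountableDimensional A := by
  let T : ℕ → A → Set ι := fun m x => {i | x ∈ branchSet F π m i}
  have hTF : ∀ m x, T m x ⊆ {i | x ∈ F m i} := fun m x i hi => branchSet_subset m i hi
  have fin : ∀ m x, {i | x ∈ F m i}.Finite := fun m x => (lf m).point_finite x
  have finT : ∀ m x, (T m x).Finite := fun m x => (fin m x).subset (hTF m x)
  have hE : ∀ m i, IsClosed (branchSet F π m i) :=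
    fun m i => isClosed_iInter fun l => isClosed_descUnion hF lf hπ l m i
  have lfE : ∀ m, LocallyFinite (branchSet F π m) := fun m => (lf m).subset (branchSet_subset m)
  have covE : ∀ m x, ∃ i, x ∈ branchSet F π m i := by
    intro m x
    obtain ⟨k, -, hk⟩ := exists_forall_mem_descUnion hπ m x (fin m x) univ fun l => by
      obtain ⟨j, hj⟩ := exists_mem_descUnion cov l m x
      exact ⟨j, trivial, hj⟩
    exact ⟨k, mem_iInter.2 hk⟩
  have mono : ∀ x, Monotone fun m => (T m x).ncard := by
    intro x
    refine monotone_nat_of_le_succ fun m => ?_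
    have : T m x ⊆ π m '' T (m + 1) x := by
      intro j hj
      obtain ⟨k, hk, hx⟩ := exists_child_mem_branchSet hπ (fin (m + 1) x) hj
      exact ⟨k, hx, hk⟩
    exact (ncard_le_ncard this ((finT _ x).image _)).trans (ncard_image_le (finT _ x))
  have bdd : ∀ x m, (T m x).ncard ≤ 2 := by
    intro x m
    have : (T m x).ncard ≤ (univ : Set Bool).ncard := by
      refine ncard_le_ncard_of_injOn color (fun _ _ => mem_univ _) ?_ finite_univ
      intro i hi i' hi' h
      exact col m x i i' (hTF m x hi) (hTF m x hi') h
    simpa using this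
  refine countableDimensional_of_countable (ι := ℕ × ℕ)
    (fun p => {x | ∀ l, p.2 ≤ l → (T l x).ncard = p.1}) ?_ ?_
  · intro x
    obtain ⟨k, m, h⟩ := exists_eventually_const _ (mono x) 2 (bdd x)
    exact ⟨(k, m), h⟩
  · rintro ⟨k, m⟩
    refine clopenBasis_iff.2 ?_
    rintro ⟨x, hx⟩ O hO hxO
    obtain ⟨O', hO', rfl⟩ := isOpen_induced_iff.1 hO
    obtain ⟨j, hj0, hj1⟩ := hu x O' hO' hxO
    set l := Nat.pair j m with hl
    have hml : m ≤ l + 1 := (Nat.right_le_pair j m).trans (Nat.le_succ _)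
    have hup : ∀ z : {x | ∀ l, m ≤ l → (T l x).ncard = k},
        T (l + 1) x ⊆ T (l + 1) z ↔ T (l + 1) z ⊆ T (l + 1) x := by
      intro z
      have hcard : (T (l + 1) x).ncard = (T (l + 1) z).ncard :=
        (hx _ hml).trans (z.2 _ hml).symm
      constructor
      · intro h
        exact (eq_of_subset_of_ncard_le h hcard.ge (finT _ _)).ge
      · intro h
        exact (eq_of_subset_of_ncard_le h hcard.le (finT _ _)).ge
    refine ⟨{z | T (l + 1) x ⊆ T (l + 1) z}, ⟨?_, ?_⟩, Subset.refl (T (l + 1) x), ?_⟩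
    · have : IsClosed (⋂ i ∈ T (l + 1) x, branchSet F π (l + 1) i) :=
        isClosed_biInter fun i _ => hE _ i
      convert this.preimage continuous_subtype_val using 1
      ext z
      simp [T, subset_def]
    · have : IsClosed (⋃ i : {i // i ∉ T (l + 1) x}, branchSet F π (l + 1) i) :=
        LocallyFinite.isClosed_iUnion ((lfE _).comp_injective Subtype.val_injective)
          fun i => hE _ i
      convert this.isOpen_compl.preimage continuous_subtype_val using 1
      ext z
      rw [mem_ofPred_eq, hup]
      simp only [mem_preimage, mem_compl_iff, mem_iUnion, not_exists, Subtype.forall]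
      exact ⟨fun h i hi hz => hi (h hz), fun h i hz => by_contra fun hi => h i hi hz⟩
    · intro z hz
      obtain ⟨i, hi⟩ := covE (l + 1) x
      have hzi : (z : A) ∈ F (l + 1) i := hTF _ _ (hz hi)
      have hlj : l.unpair.1 = j := by simp [hl]
      rcases small l i with h | h
      · exact hj1 _ (hlj ▸ h z hzi)
      · exact absurd (hlj ▸ h x (hTF _ _ hi)) hj0.not_gt

/-! ### Thresholds evading countably many partial continuous functions -/

/-- The part of `g ⁻¹' V` covered by the preimages of those among the first `s` members of `𝓑` that
lie in `V`. -/
def stageSet {A : Type*} (g : A → ℝ) (𝓑 : ℕ → Set ℝ) (V : Set ℝ) (s : ℕ) : Set A :=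
  ⋃ k ∈ {k | k < s ∧ 𝓑 k ⊆ V}, g ⁻¹' 𝓑 k

section Stage

variable {A : Type*} {g : A → ℝ} {𝓑 : ℕ → Set ℝ} {V : Set ℝ}

lemma isClopen_stageSet [TopologicalSpace A] (h : ∀ k, IsClopen (g ⁻¹' 𝓑 k)) (s : ℕ) :
    IsClopen (stageSet g 𝓑 V s) :=
  ((finite_lt_nat s).subset fun _ hk => hk.1).isClopen_biUnion fun k _ => h k

lemma stageSet_mono : Monotone (stageSet g 𝓑 V) := by
  intro s t hst
  exact biUnion_subset_biUnion_left fun k hk => ⟨hk.1.trans_le hst, hk.2⟩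

lemma mem_of_mem_stageSet {s : ℕ} {x : A} (hx : x ∈ stageSet g 𝓑 V s) : g x ∈ V := by
  obtain ⟨k, hk, hxk⟩ := mem_iUnion₂.1 hx
  exact hk.2 hxk

lemma exists_mem_stageSet (hb : IsTopologicalBasis (range 𝓑)) (hV : IsOpen V) {x : A}
    (hx : g x ∈ V) : ∃ s, x ∈ stageSet g 𝓑 V s := by
  obtain ⟨_, ⟨k, rfl⟩, hxk, hkV⟩ := hb.exists_subset_of_mem_open hx hV
  exact ⟨k + 1, mem_iUnion₂.2 ⟨k, ⟨k.lt_succ_self, hkV⟩, hxk⟩⟩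

end Stage

open Classical in
/-- The continuous functions `ρ t` are Cantor set valued; digit `e` of `ρ t x` is chosen to differ
from digit `e` of `H e (g x)` as soon as the latter has been recognised from approximations of
`g x`. Consequently a function `u j` with `u j x = H e (g x)` differs from `ρ t` near `x` for all
large `t`, whether or not other digits of `ρ t` have settled. -/
lemma exists_thresholds {A : Type*} [TopologicalSpace A] (g : A → ℝ) (𝓑 : ℕ → Set ℝ)
    (hb : IsTopologicalBasis (range 𝓑)) (hc : ∀ k, IsClopen (g ⁻¹' 𝓑 k))
    (u : ℕ → A → ℝ) (hu : ∀ j, Continuous (u j)) (H : ℕ → PartialContMap ℝ ℝ)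
    (hH : ∀ x j, ∃ e, ∃ hh : g x ∈ (H e).dom, u j x = (H e).toFun ⟨g x, hh⟩) :
    ∃ ρ : ℕ → A → ℝ, (∀ t, Continuous (ρ t)) ∧ (∀ t x, ρ t x ∈ Icc (0 : ℝ) 1) ∧
      ∀ j x, ∃ s, ∀ᶠ z in 𝓝 x, ∀ t, s ≤ t → u j z ≠ ρ t z := by
  have hcont := isEmbedding_cantorEmb.continuous
  -- disjoint open neighbourhoods of the two halves of the Cantor set given by digit `e`
  have sep : ∀ e : ℕ, SeparatedNhds (cantorEmb '' {b | b e = false})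
      (cantorEmb '' {b | b e = true}) := by
    intro e
    have hcl : ∀ c : Bool, IsClosed {b : ℕ → Bool | b e = c} := fun c =>
      isClosed_eq (continuous_apply e) continuous_const
    refine SeparatedNhds.of_isCompact_isCompact ((hcl _).isCompact.image hcont)
      ((hcl _).isCompact.image hcont) ?_
    rw [disjoint_image_iff isEmbedding_cantorEmb.injective, Set.disjoint_left]
    intro b h0 h1
    simp_all
  choose U₀ U₁ hU₀ hU₁ hK₀ hK₁ hdisj using sep
  have ext : ∀ e (U : Set ℝ), IsOpen U → ∃ V : Set ℝ, IsOpen V ∧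
      ∀ y (hy : y ∈ (H e).dom), y ∈ V ↔ (H e).toFun ⟨y, hy⟩ ∈ U := by
    intro e U hU
    obtain ⟨V, hV, hVU⟩ := isOpen_induced_iff.1 (hU.preimage (H e).cont)
    refine ⟨V, hV, fun y hy => ?_⟩
    have := congrArg (fun s => (⟨y, hy⟩ : (H e).dom) ∈ s) hVU
    exact iff_of_eq this
  choose V₀ hV₀ hVU₀ using fun e => ext e (U₀ e) (hU₀ e)
  choose V₁ hV₁ hVU₁ using fun e => ext e (U₁ e) (hU₁ e)
  let S : ℕ → ℕ → Set A := fun t e => ⋃ s ∈ {s | s ≤ t},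
    stageSet g 𝓑 (V₀ e) s \ stageSet g 𝓑 (V₁ e) s
  have hS : ∀ t e, IsClopen (S t e) := fun t e =>
    (finite_le_nat t).isClopen_biUnion fun s _ =>
      (isClopen_stageSet hc s).diff (isClopen_stageSet hc s)
  let bits : ℕ → A → ℕ → Bool := fun t x e => decide (x ∈ S t e)
  have hbits : ∀ t, Continuous (bits t) := fun t => continuous_pi fun e =>
    ((continuous_boolIndicator_iff_isClopen (S t e)).2 (hS t e)).congr fun y => by
      by_cases hy : y ∈ S t e <;> simp [boolIndicator, bits, hy]
  refine ⟨fun t x => cantorEmb (bits t x), fun t => hcont.comp (hbits t),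
    fun t x => cantorEmb_mem _, ?_⟩
  intro j x
  obtain ⟨e, hy, hux⟩ := hH x j
  by_cases h0 : u j x ∈ U₀ e
  · -- here digit `e` of `ρ t` is eventually `true` near `x`
    have hx0 : g x ∈ V₀ e := (hVU₀ e _ hy).2 (hux ▸ h0)
    have hx1 : g x ∉ V₁ e := fun h =>
      (Set.disjoint_left.1 (hdisj e) h0) (hux ▸ (hVU₁ e _ hy).1 h)
    obtain ⟨s, hs⟩ := exists_mem_stageSet hb (hV₀ e) hx0
    refine ⟨s, ?_⟩
    filter_upwards [(hu j).continuousAt.eventually_mem ((hU₀ e).mem_nhds h0),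
      ((isClopen_stageSet (V := V₀ e) hc s).diff
        (isClopen_stageSet (V := V₁ e) hc s)).isOpen.mem_nhds
        ⟨hs, fun h => hx1 (mem_of_mem_stageSet h)⟩] with z hz hzs t hst heq
    have hbit : bits t z e = true := decide_eq_true (mem_iUnion₂.2 ⟨s, hst, hzs⟩)
    exact Set.disjoint_left.1 (hdisj e) hz (heq ▸ hK₁ e ⟨_, hbit, rfl⟩)
  by_cases h1 : u j x ∈ U₁ e
  · -- here digit `e` of `ρ t` is `false` near `x` for all `t`
    have hx1 : g x ∈ V₁ e := (hVU₁ e _ hy).2 (hux ▸ h1)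
    have hx0 : g x ∉ V₀ e := fun h => h0 (hux ▸ (hVU₀ e _ hy).1 h)
    obtain ⟨s, hs⟩ := exists_mem_stageSet hb (hV₁ e) hx1
    refine ⟨0, ?_⟩
    filter_upwards [(hu j).continuousAt.eventually_mem ((hU₁ e).mem_nhds h1),
      (isClopen_stageSet (V := V₁ e) hc s).isOpen.mem_nhds hs,
      (isClopen_stageSet (V := V₀ e) hc s).compl.isOpen.mem_nhds
        fun h => hx0 (mem_of_mem_stageSet h)] with z hz hz1 hz0 t _ heq
    have hbit : bits t z e = false := by
      refine decide_eq_false fun h => ?_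
      obtain ⟨s', _, h0', h1'⟩ := mem_iUnion₂.1 h
      rcases le_total s s' with hss | hss
      · exact h1' (stageSet_mono hss hz1)
      · exact hz0 (stageSet_mono hss h0')
    exact Set.disjoint_left.1 (hdisj e) (heq ▸ hK₀ e ⟨_, hbit, rfl⟩) hz
  · refine ⟨0, ?_⟩
    have hrange : ∀ b, cantorEmb b ∈ U₀ e ∪ U₁ e := by
      intro b
      cases hbe : b e
      · exact Or.inl (hK₀ e ⟨b, hbe, rfl⟩)
      · exact Or.inr (hK₁ e ⟨b, hbe, rfl⟩)
    have hcl : IsClosed (range cantorEmb) := (isCompact_range hcont).isClosed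
    have hx : u j x ∈ (range cantorEmb)ᶜ := by
      rintro ⟨b, hb'⟩
      rcases hrange b with h | h
      · exact h0 (hb' ▸ h)
      · exact h1 (hb' ▸ h)
    filter_upwards [(hu j).continuousAt.eventually_mem (hcl.isOpen_compl.mem_nhds hx)]
      with z hz t _ heq
    exact hz ⟨_, heq.symm⟩

/-! ### Refinements of order two -/

/-- Every open cover has an open refinement consisting of two families (indices of equal colour,
the colour of `(n, j)` being the parity of `n`) of pairwise disjoint sets. -/
lemma exists_refinement {A κ : Type*} [TopologicalSpace A] [NormalSpace A] [ParacompactSpace A]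
    [Nonempty A] (u ρ : ℕ → A → ℝ) (hu : ∀ j, Continuous (u j))
    (hS : ∀ x O, IsOpen O → x ∈ O → ∃ j, u j x < 0 ∧ ∀ z, u j z < 1 → z ∈ O)
    (hρ : ∀ t, Continuous (ρ t)) (hρI : ∀ t x, ρ t x ∈ Icc (0 : ℝ) 1)
    (hev : ∀ j x, ∃ s, ∀ᶠ z in 𝓝 x, ∀ t, s ≤ t → u j z ≠ ρ t z)
    (W : κ → Set A) (hW : ∀ k, IsOpen (W k)) (hcov : ∀ x, ∃ k, x ∈ W k) :
    ∃ V : ℕ × ℕ → Set A, (∀ i, IsOpen (V i)) ∧ (∀ x, ∃ i, x ∈ V i) ∧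
      (∀ i, ∃ k, V i ⊆ W k) ∧
      ∀ x i i', x ∈ V i → x ∈ V i' → i.1.bodd = i'.1.bodd → i = i' := by
  let good : ℕ → Prop := fun j => ∃ k, {z | u j z < 1} ⊆ W k
  let I : ℕ → ℕ → Set A := fun n j => interior {x | ∀ t, n ≤ t → ∀ i, i ≤ j → u i x ≠ ρ t x}
  have hI : ∀ {n m i j x}, n ≤ m → i ≤ j → x ∈ I n j → x ∈ I m i := by
    intro n m i j x hnm hij hx
    have hsub : {x | ∀ t, n ≤ t → ∀ k, k ≤ j → u k x ≠ ρ t x} ⊆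
        {x | ∀ t, m ≤ t → ∀ k, k ≤ i → u k x ≠ ρ t x} :=
      fun z hz t ht k hk => hz t (hnm.trans ht) k (hk.trans hij)
    exact interior_mono hsub hx
  let Y : ℕ → Set A := fun n => {x | ∃ j, good j ∧ u j x < 0 ∧ x ∈ I n j}
  have hYmono : ∀ {n m x}, n ≤ m → x ∈ Y n → x ∈ Y m := by
    rintro n m x hnm ⟨j, hj, h0, hx⟩
    exact ⟨j, hj, h0, hI hnm le_rfl hx⟩
  have hYopen : ∀ n, IsOpen (Y n) := by
    intro n
    rw [isOpen_iff_mem_nhds]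
    rintro x ⟨j, hj, h0, hx⟩
    filter_upwards [(hu j).continuousAt.eventually_lt_const h0, isOpen_interior.mem_nhds hx]
      with z hz hz'
    exact ⟨j, hj, hz, hz'⟩
  have hYcov : ∀ x, ∃ n, x ∈ Y n := by
    intro x
    obtain ⟨k, hk⟩ := hcov x
    obtain ⟨j, hj0, hj1⟩ := hS x (W k) (hW k) hk
    choose s hs using fun j => hev j x
    refine ⟨(Finset.range (j + 1)).sup s, j, ⟨k, hj1⟩, hj0, mem_interior_iff_mem_nhds.2 ?_⟩
    have : ∀ᶠ z in 𝓝 x, ∀ i ∈ Finset.range (j + 1), ∀ t, s i ≤ t → u i z ≠ ρ t z :=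
      (Finset.eventually_all _).2 fun i _ => hs i
    filter_upwards [this] with z hz t ht i hi
    have hi' : i ∈ Finset.range (j + 1) := Finset.mem_range.2 (Nat.lt_succ_of_le hi)
    exact hz i hi' t ((Finset.le_sup hi').trans ht)
  -- a continuous function `f` such that `f x < n` implies `x ∈ Y n`
  obtain ⟨f, hf⟩ : ∃ f : C(A, ℝ), ∀ x, f x ∈ {r : ℝ | ∀ n : ℕ, r < n → x ∈ Y n} := by
    refine exists_continuous_forall_mem_convex_of_local_const (fun x => ?_) fun x => ?_
    · have : IsUpperSet {r : ℝ | ∀ n : ℕ, r < n → x ∈ Y n} :=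
        fun r r' hr h n hn => h n (hr.trans_lt hn)
      exact this.ordConnected.convex
    · obtain ⟨n, hn⟩ := hYcov x
      refine ⟨n, ?_⟩
      filter_upwards [(hYopen n).mem_nhds hn] with z hz m hm
      exact hYmono (by exact_mod_cast hm.le) hz
  let C : ℕ → ℕ → Set A := fun n j => {x | good j ∧ x ∈ I n j ∧ u j x < ρ n x ∧
    ∀ i ∈ Finset.range j, good i → ρ n x < u i x}
  have hCopen : ∀ n j, IsOpen (C n j) := by
    intro n j
    rw [isOpen_iff_mem_nhds]
    rintro x ⟨hj, hx, hlt, hall⟩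
    have : ∀ᶠ z in 𝓝 x, ∀ i ∈ Finset.range j, good i → ρ n z < u i z := by
      refine (Finset.eventually_all _).2 fun i hi => ?_
      by_cases hg : good i
      · filter_upwards [(hρ n).continuousAt.eventually_lt (hu i).continuousAt (hall i hi hg)]
          with z hz _ using hz
      · exact Eventually.of_forall fun z h => (hg h).elim
    filter_upwards [isOpen_interior.mem_nhds hx,
      (hu j).continuousAt.eventually_lt (hρ n).continuousAt hlt, this] with z h1 h2 h3
    exact ⟨hj, h1, h2, h3⟩
  have hCY : ∀ n x, x ∈ Y n → ∃ j, x ∈ C n j := by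
    classical
    rintro n x ⟨j, hj, h0, hx⟩
    have hex : ∃ i, good i ∧ u i x < ρ n x := ⟨j, hj, h0.trans_le (hρI n x).1⟩
    have hle : Nat.find hex ≤ j := Nat.find_min' hex ⟨hj, h0.trans_le (hρI n x).1⟩
    refine ⟨Nat.find hex, (Nat.find_spec hex).1, hI le_rfl hle hx, (Nat.find_spec hex).2, ?_⟩
    intro i hi hg
    have hi' := Finset.mem_range.1 hi
    have hne : u i x ≠ ρ n x := interior_subset hx n le_rfl i (hi'.le.trans hle)
    exact lt_of_le_of_ne (not_lt.1 fun h => Nat.find_min hex hi' ⟨hg, h⟩) hne.symm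
  have hCinj : ∀ n x j j', x ∈ C n j → x ∈ C n j' → j = j' := by
    have aux : ∀ n x j j', x ∈ C n j → x ∈ C n j' → ¬ j < j' := fun n x j j' h h' hlt =>
      lt_asymm h.2.2.1 (h'.2.2.2 j (Finset.mem_range.2 hlt) h.1)
    intro n x j j' h h'
    exact le_antisymm (not_lt.1 (aux n x j' j h' h)) (not_lt.1 (aux n x j j' h h'))
  refine ⟨fun i => {x | |max (f x) 0 - i.1| < 1} ∩ C (i.1 + 1) i.2, fun i => ?_, fun x => ?_,
    fun i => ?_, ?_⟩
  · exact (isOpen_lt (by fun_prop) continuous_const).inter (hCopen _ _)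
  · have h0 : (0 : ℝ) ≤ max (f x) 0 := le_max_right _ _
    set n := ⌊max (f x) 0⌋₊ with hn
    have h1 := Nat.floor_le h0
    have h2 := Nat.lt_floor_add_one (max (f x) 0)
    rw [← hn] at h1 h2
    obtain ⟨j, hj⟩ := hCY (n + 1) x (hf x (n + 1) (by
      push_cast
      exact (le_max_left _ _).trans_lt h2))
    refine ⟨(n, j), ?_, hj⟩
    simp only [mem_ofPred_eq, abs_lt]
    constructor <;> linarith
  · by_cases hg : good i.2
    · obtain ⟨k, hk⟩ := hg
      exact ⟨k, fun x hx => hk (hx.2.2.2.1.trans_le (hρI _ x).2)⟩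
    · obtain ⟨k, -⟩ := hcov (Classical.arbitrary A)
      exact ⟨k, fun x hx => (hg hx.2.1).elim⟩
  · rintro x ⟨n, j⟩ ⟨n', j'⟩ ⟨h, hC⟩ ⟨h', hC'⟩ hpar
    simp only [mem_ofPred_eq, abs_lt] at h h'
    have e1 : (n : ℝ) < n' + 2 := by linarith
    have e2 : (n' : ℝ) < n + 2 := by linarith
    have e1' : n < n' + 2 := by exact_mod_cast e1
    have e2' : n' < n + 2 := by exact_mod_cast e2
    have hnn : n = n' := by
      have p1 := Nat.mod_two_of_bodd n
      have p2 := Nat.mod_two_of_bodd n'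
      simp only at hpar
      rw [hpar] at p1
      omega
    subst hnn
    have hjj : j = j' := hCinj _ _ _ _ hC hC'
    rw [hjj]

/-! ### Assembling the tree -/

/-- The open sets `L i` form one level of the tree: their closures are a locally finite cover in
which two distinct members of the same colour are disjoint. -/
structure IsLevel {A : Type*} [TopologicalSpace A] (L : ℕ × ℕ → Set A) : Prop where
  isOpen : ∀ i, IsOpen (L i)
  cover : ∀ x, ∃ i, x ∈ L i
  locallyFinite : LocallyFinite fun i => closure (L i)
  color : ∀ x i i', x ∈ closure (L i) → x ∈ closure (L i') → i.1.bodd = i'.1.bodd → i = i'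

section Assembly

variable {A : Type*} [TopologicalSpace A] [MetrizableSpace A] (u ρ : ℕ → A → ℝ)

lemma exists_level_refinement {κ : Type*} [Nonempty A] (hu : ∀ j, Continuous (u j))
    (hS : ∀ x O, IsOpen O → x ∈ O → ∃ j, u j x < 0 ∧ ∀ z, u j z < 1 → z ∈ O)
    (hρ : ∀ t, Continuous (ρ t)) (hρI : ∀ t x, ρ t x ∈ Icc (0 : ℝ) 1)
    (hev : ∀ j x, ∃ s, ∀ᶠ z in 𝓝 x, ∀ t, s ≤ t → u j z ≠ ρ t z)
    (W : κ → Set A) (hW : ∀ k, IsOpen (W k)) (hcov : ∀ x, ∃ k, x ∈ W k) :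
    ∃ L : ℕ × ℕ → Set A, IsLevel L ∧ ∀ i, ∃ k, closure (L i) ⊆ W k := by
  let _ := metrizableSpaceMetric A
  obtain ⟨V, hVo, hVc, hVW, hVcol⟩ := exists_refinement u ρ hu hS hρ hρI hev W hW hcov
  obtain ⟨v, hvo, hvc, hvlf, hvV⟩ := precise_refinement V hVo
    (eq_univ_of_forall fun x => mem_iUnion.2 (hVc x))
  obtain ⟨L, hLc, hLo, hLv⟩ := exists_iUnion_eq_closure_subset hvo
    (fun x => hvlf.point_finite x) hvc
  refine ⟨L, ⟨hLo, fun x => mem_iUnion.1 (hLc ▸ mem_univ x), hvlf.subset hLv, ?_⟩, fun i => ?_⟩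
  · intro x i i' hi hi' h
    exact hVcol x i i' (hvV i (hLv i hi)) (hvV i' (hLv i' hi')) h
  · obtain ⟨k, hk⟩ := hVW i
    exact ⟨k, ((hLv i).trans (hvV i)).trans hk⟩

lemma countableDimensional_of_thresholds (hu : ∀ j, Continuous (u j))
    (hS : ∀ x O, IsOpen O → x ∈ O → ∃ j, u j x < 0 ∧ ∀ z, u j z < 1 → z ∈ O)
    (hρ : ∀ t, Continuous (ρ t)) (hρI : ∀ t x, ρ t x ∈ Icc (0 : ℝ) 1)
    (hev : ∀ j x, ∃ s, ∀ᶠ z in 𝓝 x, ∀ t, s ≤ t → u j z ≠ ρ t z) :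
    CountableDimensional A := by
  rcases isEmpty_or_nonempty A with hA | hA
  · exact countableDimensional_of_countable (ι := Empty) (fun _ => ∅)
      (fun x => hA.elim x) fun i => i.elim
  have init := exists_level_refinement u ρ hu hS hρ hρI hev (fun _ : Unit => univ)
    (fun _ => isOpen_univ) fun x => ⟨(), mem_univ x⟩
  have step : ∀ (j : ℕ) (L : {L : ℕ × ℕ → Set A // IsLevel L}),
      ∃ L' : {L : ℕ × ℕ → Set A // IsLevel L}, ∀ i, ∃ k, closure (L'.1 i) ⊆ closure (L.1 k) ∧
        ((∀ x ∈ closure (L'.1 i), u j x < 1) ∨ ∀ x ∈ closure (L'.1 i), 0 < u j x) := by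
    intro j L
    obtain ⟨L', hL', h⟩ := exists_level_refinement u ρ hu hS hρ hρI hev
      (fun p : (ℕ × ℕ) × Bool => L.1 p.1 ∩ if p.2 then {x | u j x < 1} else {x | 0 < u j x})
      (fun p => (L.2.isOpen p.1).inter (by
        split_ifs
        · exact isOpen_lt (hu j) continuous_const
        · exact isOpen_lt continuous_const (hu j)))
      (fun x => by
        obtain ⟨i, hi⟩ := L.2.cover x
        rcases lt_or_ge (u j x) 1 with h | h
        · exact ⟨(i, true), hi, by simpa using h⟩
        · exact ⟨(i, false), hi, by simpa using zero_lt_one.trans_le h⟩)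
    refine ⟨⟨L', hL'⟩, fun i => ?_⟩
    obtain ⟨⟨k, b⟩, hk⟩ := h i
    refine ⟨k, fun x hx => subset_closure (hk hx).1, ?_⟩
    cases b
    · exact Or.inr fun x hx => by simpa using (hk hx).2
    · exact Or.inl fun x hx => by simpa using (hk hx).2
  obtain ⟨L₀, hL₀, -⟩ := init
  choose next π hπ using step
  let L : ℕ → {L : ℕ × ℕ → Set A // IsLevel L} := fun m =>
    Nat.rec ⟨L₀, hL₀⟩ (fun m L => next m.unpair.1 L) m
  refine countableDimensional_of_tree u hS (fun i : ℕ × ℕ => i.1.bodd)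
    (fun m i => closure ((L m).1 i)) (fun m i => π m.unpair.1 (L m) i)
    (fun m i => isClosed_closure) (fun m => (L m).2.locallyFinite)
    (fun m x => ?_) (fun m => (L m).2.color) (fun m i => (hπ m.unpair.1 (L m) i).1)
    (fun m i => (hπ m.unpair.1 (L m) i).2)
  obtain ⟨i, hi⟩ := (L m).2.cover x
  exact ⟨i, subset_closure hi⟩

end Assembly

/-! ### Spaces that are not 0-avoiding are countable dimensional -/

/-- The rescaled distances to the points of a dense sequence: every neighbourhood of `x` contains
some `{u j < 1}` with `u j x < 0`. -/
lemma exists_distance_functions (X : Type*) [TopologicalSpace X] [MetrizableSpace X]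
    [SeparableSpace X] [Nonempty X] :
    ∃ u : ℕ → X → ℝ, (∀ j, Continuous (u j)) ∧
      ∀ x O, IsOpen O → x ∈ O → ∃ j, u j x < 0 ∧ ∀ z, u j z < 1 → z ∈ O := by
  let _ := metrizableSpaceMetric X
  refine ⟨fun j x => (j.unpair.2 + 1) * dist x (denseSeq X j.unpair.1) - 1,
    fun j => by fun_prop, fun x O hO hx => ?_⟩
  obtain ⟨ε, hε, hball⟩ := Metric.isOpen_iff.1 hO x hx
  obtain ⟨n, hn⟩ := exists_nat_one_div_lt (show 0 < ε / 3 by positivity)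
  have hn0 : (0 : ℝ) < n + 1 := by positivity
  obtain ⟨i, hxi⟩ := (denseRange_denseSeq X).exists_dist_lt x
    (show 0 < 1 / ((n : ℝ) + 1) by positivity)
  refine ⟨Nat.pair i n, ?_, fun z hz => hball ?_⟩
  · simp only [Nat.unpair_pair]
    rw [lt_div_iff₀ hn0] at hxi
    linarith
  · simp only [Nat.unpair_pair] at hz
    have hzi : dist z (denseSeq X i) < 2 / ((n : ℝ) + 1) := by
      rw [lt_div_iff₀ hn0]
      linarith
    have htri := dist_triangle_right z x (denseSeq X i)
    have h21 : 2 / ((n : ℝ) + 1) = 2 * (1 / ((n : ℝ) + 1)) := by ring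
    rw [Metric.mem_ball]
    linarith

/-- Sets on which `g` is constant with a rational value, or takes irrational values only, pull the
rational intervals back to clopen sets. -/
lemma isClopen_preimage_Ioo {A : Type*} [TopologicalSpace A] {g : A → ℝ} (hg : Continuous g)
    (q : Option ℚ) (hq : ∀ x, q.elim (Irrational (g x)) fun r => g x = r) (a b : ℚ) :
    IsClopen (g ⁻¹' Ioo (a : ℝ) b) := by
  cases q with
  | none =>
    refine ⟨?_, isOpen_Ioo.preimage hg⟩
    convert isClosed_Icc.preimage hg (t := Icc (a : ℝ) b) using 1
    ext x
    have hx : Irrational (g x) := hq x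
    exact ⟨fun h => ⟨h.1.le, h.2.le⟩,
      fun h => ⟨lt_of_le_of_ne h.1 (hx.ne_rat a).symm, lt_of_le_of_ne h.2 (hx.ne_rat b)⟩⟩
  | some r =>
    have hr : g = fun _ => (r : ℝ) := funext hq
    rw [hr]
    by_cases h : (r : ℝ) ∈ Ioo (a : ℝ) b
    · rw [preimage_const_of_mem h]
      exact isClopen_univ
    · rw [preimage_const_of_notMem h]
      exact isClopen_empty

lemma exists_basis_seq : ∃ 𝓑 : ℕ → Set ℝ, IsTopologicalBasis (range 𝓑) ∧
    ∀ k, ∃ a b : ℚ, 𝓑 k = Ioo (a : ℝ) b := by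
  have hb := Real.isTopologicalBasis_Ioo_rat
  have hc : (⋃ (a : ℚ) (b : ℚ) (_ : a < b), {Ioo (a : ℝ) b}).Countable :=
    countable_iUnion fun a => countable_iUnion fun b => countable_iUnion fun _ =>
      countable_singleton _
  obtain ⟨𝓑, h𝓑⟩ := hc.exists_eq_range ⟨Ioo ((0 : ℚ) : ℝ) (1 : ℚ), by
    simp only [mem_iUnion]
    exact ⟨0, 1, zero_lt_one, rfl⟩⟩
  refine ⟨𝓑, h𝓑 ▸ hb, fun k => ?_⟩
  have hk : 𝓑 k ∈ ⋃ (a : ℚ) (b : ℚ) (_ : a < b), {Ioo (a : ℝ) b} := h𝓑 ▸ mem_range_self k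
  simp only [mem_iUnion] at hk
  obtain ⟨a, b, -, h⟩ := hk
  exact ⟨a, b, h⟩

lemma countableDimensional_of_not_zeroAvoiding {X : Type*} [TopologicalSpace X]
    [MetrizableSpace X] [SeparableSpace X] (hX : ¬ ZeroAvoiding X) : CountableDimensional X := by
  rcases isEmpty_or_nonempty X with hE | hE
  · exact countableDimensional_of_countable (ι := Empty) (fun _ => ∅)
      (fun x => hE.elim x) fun i => i.elim
  obtain ⟨u, hu, hS⟩ := exists_distance_functions X
  let f : ℕ → PartialContMap X ℝ := fun j =>
    ⟨univ, fun x => u j x, (hu j).comp continuous_subtype_val⟩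
  have hav : ¬ Avoids (range f) := fun h => hX ⟨range f, countable_range f, h⟩
  unfold Avoids at hav
  push Not at hav
  obtain ⟨G, hG, H, hH, hGH⟩ := hav
  -- the nowhere defined map only serves to make the set of functions nonempty
  let h₀ : PartialContMap ℝ ℝ := ⟨∅, fun _ => 0, continuous_const⟩
  obtain ⟨η, hη⟩ := (hH.insert h₀).exists_eq_range (insert_nonempty _ _)
  obtain ⟨𝓑, hb, h𝓑⟩ := exists_basis_seq
  have : Countable G := hG
  let P : G × Option ℚ → Set X := fun p => {x | ∃ hx : x ∈ p.1.1.dom,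
    (∀ j, ∃ e, ∃ hh : p.1.1.toFun ⟨x, hx⟩ ∈ (η e).dom, u j x = (η e).toFun ⟨_, hh⟩) ∧
    p.2.elim (Irrational (p.1.1.toFun ⟨x, hx⟩)) fun r => p.1.1.toFun ⟨x, hx⟩ = r}
  refine countableDimensional_of_pieces P (fun x => ?_) ?_
  · obtain ⟨g, hg, hgx, hall⟩ := hGH x
    have key : ∀ j, ∃ e, ∃ hh : g.toFun ⟨x, hgx⟩ ∈ (η e).dom,
        u j x = (η e).toFun ⟨_, hh⟩ := by
      intro j
      obtain ⟨h, hh, hd, heq⟩ := hall (f j) (mem_range_self j) (mem_univ x)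
      obtain ⟨e, rfl⟩ : h ∈ range η := hη ▸ mem_insert_of_mem _ hh
      exact ⟨e, hd, heq⟩
    by_cases hirr : Irrational (g.toFun ⟨x, hgx⟩)
    · exact ⟨(⟨g, hg⟩, none), hgx, key, hirr⟩
    · obtain ⟨r, hr⟩ := not_not.1 hirr
      exact ⟨(⟨g, hg⟩, some r), hgx, key, hr.symm⟩
  · rintro ⟨⟨g, hg⟩, q⟩
    let g' : P (⟨g, hg⟩, q) → ℝ := fun x => g.toFun ⟨x, x.2.choose⟩
    have hg' : Continuous g' := g.cont.comp (Continuous.subtype_mk continuous_subtype_val _)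
    obtain ⟨ρ, hρ, hρI, hev⟩ := exists_thresholds g' 𝓑 hb
      (fun k => by
        obtain ⟨a, b, hab⟩ := h𝓑 k
        rw [hab]
        exact isClopen_preimage_Ioo hg' q (fun x => x.2.choose_spec.2) a b)
      (fun j x => u j x) (fun j => (hu j).comp continuous_subtype_val) η
      (fun x j => x.2.choose_spec.1 j)
    refine countableDimensional_of_thresholds (fun j x => u j x) ρ
      (fun j => (hu j).comp continuous_subtype_val) ?_ hρ hρI hev
    rintro x O hO hx
    obtain ⟨O', hO', rfl⟩ := isOpen_induced_iff.1 hO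
    obtain ⟨j, hj0, hj1⟩ := hS x O' hO' hx
    exact ⟨j, hj0, fun z hz => hj1 z hz⟩

/-- A separable metrizable space is countable dimensional iff it is not 0-avoiding. -/
theorem stmt14 (X : Type*) [TopologicalSpace X] [TopologicalSpace.MetrizableSpace X]
    [TopologicalSpace.SeparableSpace X] :
    CountableDimensional X ↔ ¬ ZeroAvoiding X := by
  have : SecondCountableTopology X := by
    let _ := metrizableSpaceMetric X
    exact UniformSpace.secondCountable_of_separable X
  exact ⟨not_zeroAvoiding_of_countableDimensional, countableDimensional_of_not_zeroAvoiding⟩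
end

section
/- There exists a sequence (X_i)_{i ∈ ℕ} of totally disconnected subspaces of the Hilbert cube [0,1]^ℕ such that, setting Y = [0,1]^ℕ \ ⋃_i X_i: (i) every compact subspace of Y is totally disconnected (equivalently, zero-dimensional, since compact metrizable totally disconnected spaces are zero-dimensional); and (ii) Y does not topologically embed into ℝ^N for any N ∈ ℕ (i.e., Y is infinite dimensional). -/
/-!
A closed set `L` of the Hilbert cube `Q` is called *large* here if some coordinate projection maps
it onto `[0,1]`. The sets `X_{i,p,q}` (`i ∈ ℕ`, `p < q` rational) are chosen such that

* `X_{i,p,q}` contains a point of every closed set whose `i`-th projection covers `(p, q)`, and the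
  `i`-th projection is injective on `X_{i,p,q}` with irrational values, so that `X_{i,p,q}` is
  totally disconnected;
* the union `X` of these sets contains no large closed set.

To this end every closed set `C` receives continuum many private irrationals in `(p, q)`, hence
continuum many candidates for its point in `X_{i,p,q}`; every large closed set also has continuum
many points, and there are at most continuum many closed sets. An injective choice function
(transfinite recursion, `exists_injective_choice`) picks a point for `X` from every `C` and `i, p, q`
and, disjointly from these, a point outside `X` from every large closed set.

Let `Y` be the complement of `X`. The closure of a connected set with two points projects onto a
nondegenerate interval in some coordinate, hence meets `X`; so compact subsets of `Y` are totally
disconnected.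

Suppose `Y` embeds into `ℝ^N`. If `D_0, …, D_N` are disjoint dense sets of reals, every point of
`ℝ^N` has all its coordinates outside some `D_j`, and the points with this property form a
zero-dimensional set, with the boxes with corners in `D_j` as clopen base. So `Y` is a union of
`N + 1` zero-dimensional sets `Y_j`, and for each `j ≤ N` there are disjoint open neighbourhoods
`U_j`, `V_j` of the opposite faces `x_j = 0` and `x_j = 1` of `Q` with `Y_j ⊆ U_j ∪ V_j`
(`exists_partition`). By the Poincaré–Miranda theorem (`miranda`), the closed set `L` of points
outside all the `U_j`, `V_j` meets every cube obtained by fixing the coordinates from `N + 1` on, so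
`L` is large. But `L` is disjoint from `Y`, that is, contained in `X`: a contradiction.

The Poincaré–Miranda theorem is deduced from Kuhn's cubical version of Sperner's lemma (`kuhn`),
which is proved with mod 2 cochains on the integer grid: for functions `f_j` that are `0` on the
face `v_j = 0` and `1` on the face `v_j = m`, the cup product `df_1 ∪ ⋯ ∪ df_n` integrates to `1` by
Stokes' theorem, so it is nonzero on some unit cube, where no `f_j` can be constant.
-/

open Set

namespace HilbertCube

open Filter Topology Cardinal

/-! ### Kuhn's lemma via mod 2 cup products -/

/-- The grid point obtained from `u` by increasing its `i`-th coordinate by one. -/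
def step (u : ℕ → ℕ) (i : ℕ) : ℕ → ℕ := Function.update u i (u i + 1)

lemma step_comm (u : ℕ → ℕ) (i j : ℕ) : step (step u i) j = step (step u j) i := by
  rcases eq_or_ne i j with rfl | h
  · rfl
  · ext k
    simp only [step, Function.update_apply]
    grind

/-- The mod 2 cup product `df₁ ∪ ⋯ ∪ df_k` of the differentials of a list of 0-cochains on the
integer grid, evaluated on the unit cube with lowest vertex `u` and edge directions `S`: the sum,
over all monotone edge paths from `u` to the opposite vertex, of the product of the increments
of `f_r` along the `r`-th edge. It is only meaningful when `S` has as many elements as the list. -/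
def cup : List ((ℕ → ℕ) → ZMod 2) → Finset ℕ → (ℕ → ℕ) → ZMod 2
  | [], _, _ => 1
  | f :: fs, S, u => ∑ i ∈ S, (f (step u i) + f u) * cup fs (S.erase i) (step u i)

lemma sum_symm_eq_zero (S : Finset ℕ) (g : ℕ → ℕ → ZMod 2) (hg : ∀ i j, g i j = g j i) :
    ∑ i ∈ S, ∑ j ∈ S.erase i, g i j = 0 := by
  rw [Finset.sum_sigma']
  refine Finset.sum_involution (fun a _ => ⟨a.2, a.1⟩) ?_ ?_ ?_ ?_
  · rintro ⟨i, j⟩ _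
    simp only
    rw [hg j i]
    exact CharTwo.add_self_eq_zero _
  · rintro ⟨i, j⟩ h _ h'
    simp only [Finset.mem_sigma, Finset.mem_erase] at h
    simp only [Sigma.mk.injEq] at h'
    exact h.2.1 h'.1
  · rintro ⟨i, j⟩ h
    simp only [Finset.mem_sigma, Finset.mem_erase] at h ⊢
    exact ⟨h.2.2, fun e => h.2.1 e.symm, h.1⟩
  · rintro ⟨i, j⟩ _
    rfl

lemma sum_swap (S : Finset ℕ) (g : ℕ → ℕ → ZMod 2) :
    ∑ i ∈ S, ∑ j ∈ S.erase i, g i j = ∑ j ∈ S, ∑ i ∈ S.erase j, g i j := by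
  apply Finset.sum_comm'
  intro i j
  simp only [Finset.mem_erase]
  tauto

/-- The cup product of coboundaries is a cocycle: its values on the facets of a cube add up
to zero. -/
lemma cup_closed (fs : List ((ℕ → ℕ) → ZMod 2)) (S : Finset ℕ) (u : ℕ → ℕ)
    (hS : S.card = fs.length + 1) :
    ∑ i ∈ S, (cup fs (S.erase i) (step u i) + cup fs (S.erase i) u) = 0 := by
  induction fs generalizing S u with
  | nil =>
    simp only [cup]
    exact Finset.sum_eq_zero fun _ _ => CharTwo.add_self_eq_zero _
  | cons f fs ih =>
    have key : ∀ j ∈ S, ∑ i ∈ S.erase j, cup fs ((S.erase j).erase i) (step u j) =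
        ∑ i ∈ S.erase j, cup fs ((S.erase j).erase i) (step (step u j) i) := by
      intro j hj
      have := ih (S.erase j) (step u j) (by rw [Finset.card_erase_of_mem hj, hS]; simp)
      rw [Finset.sum_add_distrib] at this
      exact (CharTwo.add_eq_zero.mp this).symm
    have s1 : ∑ i ∈ S, ∑ j ∈ S.erase i, f (step (step u i) j) *
        cup fs ((S.erase i).erase j) (step (step u i) j) = 0 :=
      sum_symm_eq_zero S (fun i j => f (step (step u i) j) *
        cup fs ((S.erase i).erase j) (step (step u i) j))
        fun i j => by simp only [step_comm u i j, Finset.erase_right_comm (a := i) (b := j)]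
    have s2 : ∑ i ∈ S, ∑ j ∈ S.erase i,
        cup fs ((S.erase i).erase j) (step (step u i) j) = 0 :=
      sum_symm_eq_zero S (fun i j =>
        cup fs ((S.erase i).erase j) (step (step u i) j))
        fun i j => by simp only [step_comm u i j, Finset.erase_right_comm (a := i) (b := j)]
    have s3 : ∑ i ∈ S, ∑ j ∈ S.erase i, f u * cup fs ((S.erase i).erase j) (step u j) = 0 := by
      rw [sum_swap]
      simp_rw [← Finset.mul_sum, Finset.erase_right_comm (s := S)]
      rw [Finset.sum_congr rfl key, s2, mul_zero]
    have s4 : ∑ i ∈ S, ∑ j ∈ S.erase i, f (step u j) * cup fs ((S.erase i).erase j) (step u j) =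
        ∑ i ∈ S, ∑ j ∈ S.erase i, f (step u i) *
          cup fs ((S.erase i).erase j) (step (step u i) j) := by
      rw [sum_swap]
      refine Finset.sum_congr rfl fun j hj => ?_
      rw [← Finset.mul_sum, ← Finset.mul_sum, ← key j hj]
      simp_rw [Finset.erase_right_comm (s := S) (a := j)]
    simp only [cup, add_mul, Finset.sum_add_distrib]
    rw [s1, s3, s4, zero_add, add_zero]
    exact CharTwo.add_self_eq_zero _

/-- The Leibniz rule: `df ∪ df₂ ∪ ⋯ ∪ df_k` is the coboundary of `f ∪ df₂ ∪ ⋯ ∪ df_k`. -/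
lemma cup_leibniz (f : (ℕ → ℕ) → ZMod 2) (fs : List ((ℕ → ℕ) → ZMod 2)) (S : Finset ℕ)
    (u : ℕ → ℕ) (hS : S.card = fs.length + 1) :
    cup (f :: fs) S u = ∑ i ∈ S,
      (f (step u i) * cup fs (S.erase i) (step u i) + f u * cup fs (S.erase i) u) := by
  have h := cup_closed fs S u hS
  rw [Finset.sum_add_distrib] at h
  have h := CharTwo.add_eq_zero.mp h
  simp only [cup, add_mul, Finset.sum_add_distrib, ← Finset.mul_sum, h]

/-- If one of the functions is constant on the hyperplane `v i = c`, then the cup product vanishes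
on all cubes inside this hyperplane. -/
lemma cup_eq_zero (f : (ℕ → ℕ) → ZMod 2) (fs : List ((ℕ → ℕ) → ZMod 2)) (hf : f ∈ fs)
    (i c : ℕ) (b : ZMod 2) (hc : ∀ v, v i = c → f v = b) (S : Finset ℕ) (hi : i ∉ S)
    (u : ℕ → ℕ) (hu : u i = c) : cup fs S u = 0 := by
  induction fs generalizing S u with
  | nil => simp at hf
  | cons g gs ih =>
    simp only [cup]
    refine Finset.sum_eq_zero fun j hj => ?_
    have hij : i ≠ j := fun e => hi (e ▸ hj)
    have hs : step u j i = c := by simp [step, Function.update_of_ne hij, hu]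
    rcases List.mem_cons.mp hf with rfl | h
    · rw [hc _ hs, hc _ hu, CharTwo.add_self_eq_zero, zero_mul]
    · rw [ih h _ (fun h' => hi (Finset.mem_of_mem_erase h')) _ hs, mul_zero]

/-- A nonzero value of the cup product on a unit cube forces every function of the list to be
nonconstant on the vertices of the cube. -/
lemma exists_ne_of_cup_ne_zero (fs : List ((ℕ → ℕ) → ZMod 2)) (S : Finset ℕ) (u : ℕ → ℕ)
    (h : cup fs S u ≠ 0) : ∀ f ∈ fs, ∃ a b : ℕ → ℕ,
      (∀ k, u k ≤ a k ∧ a k ≤ u k + 1) ∧ (∀ k, u k ≤ b k ∧ b k ≤ u k + 1) ∧ f a ≠ f b := by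
  suffices H : ∀ f ∈ fs, ∃ a b : ℕ → ℕ, (∀ k, u k ≤ a k ∧ a k ≤ u k + if k ∈ S then 1 else 0) ∧
      (∀ k, u k ≤ b k ∧ b k ≤ u k + if k ∈ S then 1 else 0) ∧ f a ≠ f b by
    intro f hf
    obtain ⟨a, b, ha, hb, hab⟩ := H f hf
    refine ⟨a, b, fun k => ?_, fun k => ?_, hab⟩
    · have := ha k
      grind
    · have := hb k
      grind
  induction fs generalizing S u with
  | nil => simp
  | cons g gs ih =>
    obtain ⟨i, hi, hne⟩ := Finset.exists_ne_zero_of_sum_ne_zero h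
    have hst : ∀ k, u k ≤ step u i k ∧ step u i k ≤ u k + if k ∈ S then 1 else 0 := by
      intro k
      simp only [step, Function.update_apply]
      grind
    intro f hf
    rcases List.mem_cons.mp hf with rfl | hf
    · refine ⟨step u i, u, hst, fun k => by simp, fun e => hne ?_⟩
      rw [e, CharTwo.add_self_eq_zero, zero_mul]
    · obtain ⟨a, b, ha, hb, hab⟩ := ih _ _ (right_ne_zero_of_mul hne) f hf
      refine ⟨a, b, fun k => ?_, fun k => ?_, hab⟩
      · have h1 := ha k
        simp only [step, Function.update_apply] at h1
        grind
      · have h1 := hb k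
        simp only [step, Function.update_apply] at h1
        grind

/-- The sum of `F` over the grid points whose coordinates in the list `l` range over
`0, …, m - 1` and whose other coordinates agree with `w`. -/
def boxSum (m : ℕ) : List ℕ → ((ℕ → ℕ) → ZMod 2) → (ℕ → ℕ) → ZMod 2
  | [], F, w => F w
  | i :: l, F, w => ∑ a ∈ Finset.range m, boxSum m l F (Function.update w i a)

lemma boxSum_sum (m : ℕ) (l : List ℕ) {ι : Type*} (S : Finset ι) (F : ι → (ℕ → ℕ) → ZMod 2)
    (w : ℕ → ℕ) : boxSum m l (fun u => ∑ i ∈ S, F i u) w = ∑ i ∈ S, boxSum m l (F i) w := by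
  induction l generalizing w with
  | nil => rfl
  | cons i l ih =>
    simp only [boxSum, ih]
    exact Finset.sum_comm

lemma boxSum_congr (m : ℕ) (l : List ℕ) (i : ℕ) (hi : i ∉ l) (F G : (ℕ → ℕ) → ZMod 2)
    (w : ℕ → ℕ) (h : ∀ u, u i = w i → F u = G u) : boxSum m l F w = boxSum m l G w := by
  induction l generalizing w with
  | nil => exact h w rfl
  | cons j l ih =>
    simp only [List.mem_cons, not_or] at hi
    simp only [boxSum]
    refine Finset.sum_congr rfl fun a _ => ih hi.2 _ fun u hu => h u ?_
    rw [hu, Function.update_of_ne hi.1]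

lemma boxSum_zero (m : ℕ) (l : List ℕ) (w : ℕ → ℕ) : boxSum m l (fun _ => 0) w = 0 := by
  induction l generalizing w with
  | nil => rfl
  | cons j l ih => simp [boxSum, ih]

lemma exists_of_boxSum_ne_zero (m : ℕ) (l : List ℕ) (F : (ℕ → ℕ) → ZMod 2) (w : ℕ → ℕ)
    (h : boxSum m l F w ≠ 0) : ∃ u, F u ≠ 0 := by
  by_contra! hF
  obtain rfl : F = fun _ => 0 := funext hF
  exact h (boxSum_zero m l w)

lemma boxSum_step (m : ℕ) (l : List ℕ) (i : ℕ) (hi : i ∉ l) (F : (ℕ → ℕ) → ZMod 2)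
    (w : ℕ → ℕ) : boxSum m l (fun u => F (step u i) + F u) w =
      boxSum m l F (step w i) + boxSum m l F w := by
  induction l generalizing w with
  | nil => rfl
  | cons j l ih =>
    simp only [List.mem_cons, not_or] at hi
    simp only [boxSum]
    rw [← Finset.sum_add_distrib]
    refine Finset.sum_congr rfl fun a _ => ?_
    rw [ih hi.2]
    congr 2
    simp only [step, Function.update_of_ne hi.1]
    exact Function.update_comm (Ne.symm hi.1) _ _ _

/-- Telescoping in one of the directions of the box. -/
lemma boxSum_telescope (m : ℕ) (l : List ℕ) (hl : l.Nodup) (i : ℕ) (hi : i ∈ l)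
    (F : (ℕ → ℕ) → ZMod 2) (w : ℕ → ℕ) :
    boxSum m l (fun u => F (step u i) + F u) w =
      boxSum m (l.erase i) F (Function.update w i m) +
      boxSum m (l.erase i) F (Function.update w i 0) := by
  induction l generalizing w with
  | nil => simp at hi
  | cons j l ih =>
    rw [List.nodup_cons] at hl
    rcases eq_or_ne i j with rfl | hij
    · simp only [boxSum, List.erase_cons_head]
      simp_rw [boxSum_step m l i hl.1]
      have : ∀ a, step (Function.update w i a) i = Function.update w i (a + 1) := by
        intro a
        simp [step]
      simp_rw [this]
      have t := Finset.sum_range_sub (fun a => boxSum m l F (Function.update w i a)) m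
      simpa only [CharTwo.sub_eq_add] using t
    · have hi' : i ∈ l := (List.mem_cons.mp hi).resolve_left hij
      rw [List.erase_cons_tail (by simpa using Ne.symm hij)]
      simp only [boxSum]
      rw [← Finset.sum_add_distrib]
      refine Finset.sum_congr rfl fun a _ => ?_
      rw [ih hl.2 hi', Function.update_comm hij, Function.update_comm hij]

/-- Stokes' theorem for the cup product: if each `f j` is `0` on the face `v j = 0` of the box
and `1` on the opposite face `v j = m`, the cup products over all unit cubes sum to `1`. -/
lemma boxSum_cup (m : ℕ) (l : List ℕ) (hl : l.Nodup) (f : ℕ → (ℕ → ℕ) → ZMod 2)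
    (h0 : ∀ j ∈ l, ∀ v, v j = 0 → f j v = 0) (h1 : ∀ j ∈ l, ∀ v, v j = m → f j v = 1)
    (w : ℕ → ℕ) : boxSum m l (cup (l.map f) l.toFinset) w = 1 := by
  induction l generalizing w with
  | nil => rfl
  | cons j l ih =>
    have hl' := List.nodup_cons.mp hl
    have hcard : (j :: l).toFinset.card = (l.map f).length + 1 := by
      rw [List.toFinset_card_of_nodup hl]
      simp
    set S := (j :: l).toFinset with hS
    have e : cup ((j :: l).map f) S = fun u => ∑ i ∈ S,
        ((fun v => f j v * cup (l.map f) (S.erase i) v) (step u i) +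
          (fun v => f j v * cup (l.map f) (S.erase i) v) u) :=
      funext fun u => cup_leibniz (f j) (l.map f) S u hcard
    have hj : j ∈ S := by simp [hS]
    rw [e, boxSum_sum, Finset.sum_eq_single_of_mem j hj]
    · refine (boxSum_telescope m _ hl j (by simp)
        (fun v => f j v * cup (l.map f) (S.erase j) v) w).trans ?_
      have hSe : S.erase j = l.toFinset := by
        rw [hS, List.toFinset_cons, Finset.erase_insert (by simpa using hl'.1)]
      rw [List.erase_cons_head, hSe,
        boxSum_congr m l j hl'.1 _ (cup (l.map f) l.toFinset) (Function.update w j m),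
        boxSum_congr m l j hl'.1 _ (fun _ => 0) (Function.update w j 0),
        ih hl'.2 (fun k hk => h0 k (List.mem_cons_of_mem _ hk))
          (fun k hk => h1 k (List.mem_cons_of_mem _ hk)), boxSum_zero, add_zero]
      · intro u hu
        rw [h0 j (by simp) u (by simpa using hu), zero_mul]
      · intro u hu
        rw [h1 j (by simp) u (by simpa using hu), one_mul]
    · intro i hi hij
      have hil : i ∈ l := (List.mem_cons.mp (List.mem_toFinset.mp hi)).resolve_left hij
      refine (boxSum_telescope m _ hl i (List.mem_toFinset.mp hi)
        (fun v => f j v * cup (l.map f) (S.erase i) v) w).trans ?_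
      have hni : i ∉ (j :: l).erase i := fun h => (hl.mem_erase_iff.mp h).1 rfl
      rw [boxSum_congr m _ i hni _ (fun _ => 0) (Function.update w i m),
        boxSum_congr m _ i hni _ (fun _ => 0) (Function.update w i 0), boxSum_zero, boxSum_zero,
        add_zero]
      · intro u hu
        rw [cup_eq_zero (f i) _ (List.mem_map_of_mem hil) i 0 0 (h0 i (List.mem_cons_of_mem _ hil))
          _ (Finset.notMem_erase i S) u (by simpa using hu), mul_zero]
      · intro u hu
        rw [cup_eq_zero (f i) _ (List.mem_map_of_mem hil) i m 1 (h1 i (List.mem_cons_of_mem _ hil))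
          _ (Finset.notMem_erase i S) u (by simpa using hu), mul_zero]

/-- Kuhn's cubical form of Sperner's lemma. -/
lemma kuhn (m n : ℕ) (f : ℕ → (ℕ → ℕ) → ZMod 2)
    (h0 : ∀ j < n, ∀ v, v j = 0 → f j v = 0) (h1 : ∀ j < n, ∀ v, v j = m → f j v = 1) :
    ∃ u : ℕ → ℕ, ∀ j < n, ∃ a b : ℕ → ℕ, (∀ k, u k ≤ a k ∧ a k ≤ u k + 1) ∧
      (∀ k, u k ≤ b k ∧ b k ≤ u k + 1) ∧ f j a = 0 ∧ f j b = 1 := by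
  have h := boxSum_cup m (List.range n) List.nodup_range f (by simpa using h0)
    (by simpa using h1) 0
  obtain ⟨u, hu⟩ := exists_of_boxSum_ne_zero m _ _ _ (by rw [h]; exact one_ne_zero)
  refine ⟨u, fun j hj => ?_⟩
  obtain ⟨a, b, ha, hb, hab⟩ := exists_ne_of_cup_ne_zero _ _ _ hu (f j)
    (List.mem_map_of_mem (by simpa using hj))
  have z : ∀ x y : ZMod 2, x ≠ y → (x = 0 ∧ y = 1) ∨ (y = 0 ∧ x = 1) := by decide
  rcases z _ _ hab with h | h
  · exact ⟨a, b, ha, hb, h⟩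
  · exact ⟨b, a, hb, ha, h⟩

/-! ### The Poincaré–Miranda theorem -/

/-- The point of the Hilbert cube with coordinates `v k / (m + 1)`, truncated to `[0,1]`,
for `k < n`, and with the coordinates of `z` from `n` on. -/
noncomputable def gridPoint (n : ℕ) (z : ℕ → unitInterval) (m : ℕ) (v : ℕ → ℕ) :
    ℕ → unitInterval :=
  fun k => if k < n then Set.projIcc 0 1 zero_le_one ((v k : ℝ) / (m + 1)) else z k

lemma dist_gridPoint (n : ℕ) (z : ℕ → unitInterval) (m : ℕ) (u a : ℕ → ℕ)
    (h : ∀ k, u k ≤ a k ∧ a k ≤ u k + 1) (k : ℕ) :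
    dist (gridPoint n z m u k) (gridPoint n z m a k) ≤ 1 / ((m : ℝ) + 1) := by
  have hm : (0 : ℝ) < m + 1 := by positivity
  unfold gridPoint
  split_ifs with hk
  · refine ((LipschitzWith.projIcc zero_le_one).dist_le_mul _ _).trans ?_
    have h1 : (u k : ℝ) ≤ a k := by exact_mod_cast (h k).1
    have h2 : (a k : ℝ) ≤ u k + 1 := by exact_mod_cast (h k).2
    rw [NNReal.coe_one, one_mul, Real.dist_eq, ← sub_div, abs_div, abs_of_pos hm]
    gcongr
    rw [abs_le]
    constructor <;> linarith
  · rw [dist_self]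
    positivity

/-- The Poincaré–Miranda theorem in terms of partitions: for `j < n` let `U j`, `V j` be disjoint
open neighbourhoods of the opposite faces `x j = 0` and `x j = 1` of the Hilbert cube. Then
the sets `U j`, `V j` with `j < n` do not cover any of the `n`-dimensional cubes obtained by fixing
the coordinates from `n` on. -/
lemma miranda (n : ℕ) (U V : ℕ → Set (ℕ → unitInterval)) (hU : ∀ j, IsOpen (U j))
    (hV : ∀ j, IsOpen (V j)) (hUV : ∀ j, Disjoint (U j) (V j))
    (h0 : ∀ j x, x j = 0 → x ∈ U j) (h1 : ∀ j x, x j = 1 → x ∈ V j) (z : ℕ → unitInterval) :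
    ∃ x : ℕ → unitInterval, (∀ k, n ≤ k → x k = z k) ∧ ∀ j < n, x ∉ U j ∧ x ∉ V j := by
  classical
  have hk : ∀ m : ℕ, ∃ u : ℕ → ℕ, ∀ j < n, ∃ a b : ℕ → ℕ, (∀ k, u k ≤ a k ∧ a k ≤ u k + 1) ∧
      (∀ k, u k ≤ b k ∧ b k ≤ u k + 1) ∧ gridPoint n z m a ∈ U j ∧ gridPoint n z m b ∉ U j := by
    intro m
    let f : ℕ → (ℕ → ℕ) → ZMod 2 := fun j v => if gridPoint n z m v ∈ U j then 0 else 1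
    have hf0 : ∀ j < n, ∀ v, v j = 0 → f j v = 0 := by
      intro j hj v hv
      have : gridPoint n z m v j = 0 := by
        simp only [gridPoint, hj, hv, if_true, Nat.cast_zero, zero_div]
        exact Set.projIcc_left zero_le_one
      simp [f, h0 j _ this]
    have hf1 : ∀ j < n, ∀ v, v j = m + 1 → f j v = 1 := by
      intro j hj v hv
      have : gridPoint n z m v j = 1 := by
        have hm : ((m : ℝ) + 1) ≠ 0 := by positivity
        simp only [gridPoint, hj, hv, if_true, Nat.cast_add, Nat.cast_one, div_self hm]
        exact Set.projIcc_right zero_le_one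
      have h2 : gridPoint n z m v ∉ U j := fun h =>
        Set.disjoint_left.mp (hUV j) h (h1 j _ this)
      simp [f, h2]
    obtain ⟨u, hu⟩ := kuhn (m + 1) n f hf0 hf1
    refine ⟨u, fun j hj => ?_⟩
    obtain ⟨a, b, ha, hb, hfa, hfb⟩ := hu j hj
    refine ⟨a, b, ha, hb, ?_, ?_⟩
    · by_contra h
      simp [f, h] at hfa
    · intro h
      simp [f, h] at hfb
  choose u hu using hk
  obtain ⟨x, -, φ, hφ, hx⟩ := (isCompact_univ (X := ℕ → unitInterval)).tendsto_subseq
    (x := fun m => gridPoint n z m (u m)) (fun _ => mem_univ _)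
  have hlim : ∀ a : ℕ → ℕ → ℕ, (∀ m k, u m k ≤ a m k ∧ a m k ≤ u m k + 1) →
      Tendsto (fun m => gridPoint n z (φ m) (a (φ m))) atTop (𝓝 x) := by
    intro a ha
    rw [tendsto_pi_nhds] at hx ⊢
    intro k
    refine tendsto_of_tendsto_of_dist (hx k) ?_
    refine squeeze_zero (fun _ => dist_nonneg)
      (fun m => dist_gridPoint n z (φ m) (u (φ m)) (a (φ m)) (ha _) k) ?_
    exact (tendsto_one_div_add_atTop_nhds_zero_nat (𝕜 := ℝ)).comp hφ.tendsto_atTop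
  refine ⟨x, fun k hk => ?_, fun j hj => ⟨?_, ?_⟩⟩
  · have := tendsto_pi_nhds.mp hx k
    refine tendsto_nhds_unique this ?_
    have e : ∀ m, gridPoint n z m (u m) k = z k := fun m => by
      simp [gridPoint, not_lt.mpr hk]
    simp [e]
  · choose a b ha hb hUa hUb using fun m => hu m j hj
    exact (hU j).isClosed_compl.mem_of_tendsto (hlim b hb) (Eventually.of_forall fun m => hUb _)
  · choose a b ha hb hUa hUb using fun m => hu m j hj
    intro hxV
    obtain ⟨m, hm⟩ := ((hlim a ha).eventually ((hV j).mem_nhds hxV)).exists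
    exact Set.disjoint_left.mp (hUV j) (hUa _) hm

/-! ### Zero-dimensional subspaces and partitions -/

/-- In a second countable space with a base of clopen sets, disjoint closed sets can be
separated by a clopen set. -/
lemma exists_clopen_separating {T : Type*} [TopologicalSpace T] [SecondCountableTopology T]
    (hb : ∀ x : T, ∀ U ∈ 𝓝 x, ∃ C, IsClopen C ∧ x ∈ C ∧ C ⊆ U) (A B : Set T)
    (hA : IsClosed A) (hB : IsClosed B) (hAB : Disjoint A B) :
    ∃ E, IsClopen E ∧ A ⊆ E ∧ Disjoint E B := by
  have h : ∀ x : T, ∃ C, IsClopen C ∧ x ∈ C ∧ (Disjoint C A ∨ Disjoint C B) := by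
    intro x
    by_cases hx : x ∈ A
    · obtain ⟨C, hC, hxC, hs⟩ := hb x Bᶜ
        (hB.isOpen_compl.mem_nhds (Set.disjoint_left.mp hAB hx))
      exact ⟨C, hC, hxC, Or.inr (Set.disjoint_left.mpr fun y hy => hs hy)⟩
    · obtain ⟨C, hC, hxC, hs⟩ := hb x Aᶜ (hA.isOpen_compl.mem_nhds hx)
      exact ⟨C, hC, hxC, Or.inl (Set.disjoint_left.mpr fun y hy => hs hy)⟩
  choose C hC hxC hCAB using h
  rcases isEmpty_or_nonempty T with hT | hT
  · exact ⟨∅, isClopen_empty, fun x => hT.elim x, by simp⟩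
  obtain ⟨s, hs, hcov⟩ := TopologicalSpace.countable_cover_nhds
    fun x => (hC x).isOpen.mem_nhds (hxC x)
  have hne : s.Nonempty := by
    by_contra h
    rw [Set.not_nonempty_iff_eq_empty] at h
    simp [h] at hcov
    exact Set.empty_ne_univ hcov
  obtain ⟨e, he⟩ := hs.exists_eq_range hne
  set O : ℕ → Set T := fun k => C (e k) with hO
  have hd : ∀ k, IsClopen (disjointed O k) := by
    intro k
    refine disjointedRec (fun {t i} ht => ht.diff (hC _)) (hC (e k))
  have hcov' : ∀ x, ∃ k, x ∈ disjointed O k := by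
    intro x
    have : x ∈ ⋃ k, disjointed O k := by
      rw [iUnion_disjointed]
      have : x ∈ ⋃ y ∈ s, C y := hcov ▸ mem_univ x
      rw [he] at this
      simpa [hO] using this
    simpa using this
  have hdis : ∀ k, Disjoint (disjointed O k) A ∨ Disjoint (disjointed O k) B := fun k =>
    (hCAB (e k)).imp (fun h => h.mono_left (disjointed_subset O k))
      (fun h => h.mono_left (disjointed_subset O k))
  -- The union of those pieces that meet `A`; its complement is the union of the other pieces.
  refine ⟨⋃ k ∈ {k | ¬ Disjoint (disjointed O k) A}, disjointed O k, ⟨?_, ?_⟩, ?_, ?_⟩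
  · have : (⋃ k ∈ {k | ¬ Disjoint (disjointed O k) A}, disjointed O k) =
        (⋃ k ∈ {k | Disjoint (disjointed O k) A}, disjointed O k)ᶜ := by
      ext x
      simp only [mem_ofPred_eq, mem_iUnion, mem_compl_iff, exists_prop, not_exists, not_and]
      constructor
      · rintro ⟨k, hk, hxk⟩ l hl hxl
        rcases eq_or_ne k l with rfl | hkl
        · exact hk hl
        · exact Set.disjoint_left.mp (disjoint_disjointed O hkl) hxk hxl
      · intro hx
        obtain ⟨k, hk⟩ := hcov' x
        exact ⟨k, fun h => hx k h hk, hk⟩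
    rw [this]
    exact (isOpen_biUnion fun k _ => (hd k).isOpen).isClosed_compl
  · exact isOpen_biUnion fun k _ => (hd k).isOpen
  · intro x hx
    obtain ⟨k, hk⟩ := hcov' x
    simp only [mem_ofPred_eq, mem_iUnion, exists_prop]
    exact ⟨k, fun h => Set.disjoint_left.mp h hk hx, hk⟩
  · rw [Set.disjoint_iUnion₂_left]
    intro k hk
    exact (hdis k).resolve_left hk

/-- Given a subspace `Z` with a clopen base, any two disjoint closed sets of the ambient space have
disjoint open neighbourhoods which together cover `Z`. -/
lemma exists_partition {Q : Type*} [TopologicalSpace Q] [CompletelyNormalSpace Q]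
    [SecondCountableTopology Q] (Z A B : Set Q)
    (hb : ∀ x : Z, ∀ U ∈ 𝓝 x, ∃ C, IsClopen C ∧ x ∈ C ∧ C ⊆ U)
    (hA : IsClosed A) (hB : IsClosed B) (hAB : Disjoint A B) :
    ∃ U V, IsOpen U ∧ IsOpen V ∧ Disjoint U V ∧ A ⊆ U ∧ B ⊆ V ∧ Z ⊆ U ∪ V := by
  obtain ⟨OA, hOA, hAOA, hOAB⟩ := normal_exists_closure_subset hA hB.isOpen_compl
    (Set.disjoint_left.mp hAB)
  obtain ⟨OB, hOB, hBOB, hOBA⟩ := normal_exists_closure_subset hB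
    (isClosed_closure (s := OA)).isOpen_compl (fun x hx h => hOAB h hx)
  obtain ⟨E, hE, hAE, hEB⟩ := exists_clopen_separating hb ((↑) ⁻¹' closure OA)
    ((↑) ⁻¹' closure OB) (isClosed_closure.preimage continuous_subtype_val)
    (isClosed_closure.preimage continuous_subtype_val)
    (Set.disjoint_left.mpr fun x hx hx' => hOBA hx' hx)
  -- The two parts of `Z`, as subsets of `Q`.
  set F : Set Q := (↑) '' E with hF
  set G : Set Q := (↑) '' Eᶜ with hG
  have hFB : Disjoint (closure F) B := by
    have h : Disjoint F OB := by
      rw [Set.disjoint_left]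
      rintro _ ⟨x, hx, rfl⟩ hxB
      exact Set.disjoint_left.mp hEB hx (subset_closure hxB)
    exact (h.closure_left hOB).mono_right hBOB
  have hGA : Disjoint (closure G) A := by
    have h : Disjoint G OA := by
      rw [Set.disjoint_left]
      rintro _ ⟨x, hx, rfl⟩ hxA
      exact hx (hAE (subset_closure hxA))
    exact (h.closure_left hOA).mono_right hAOA
  have hFG : Disjoint (closure F) G := by
    rw [Set.disjoint_left]
    rintro _ hx ⟨x, hxE, rfl⟩
    exact hxE (hE.isClosed.closure_eq ▸ (closure_subtype.mpr hx))
  have hGF : Disjoint (closure G) F := by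
    rw [Set.disjoint_left]
    rintro _ hx ⟨x, hxE, rfl⟩
    exact (hE.compl.isClosed.closure_eq ▸ (closure_subtype.mpr hx) : x ∈ Eᶜ) hxE
  have hsep : SeparatedNhds (A ∪ F) (B ∪ G) := by
    rw [separatedNhds_iff_disjoint]
    apply CompletelyNormalSpace.completely_normal
    · rw [closure_union, hA.closure_eq, Set.disjoint_union_left, Set.disjoint_union_right,
        Set.disjoint_union_right]
      exact ⟨⟨hAB, (hGA.mono_left subset_closure).symm⟩, hFB, hFG⟩
    · rw [closure_union, hB.closure_eq, Set.disjoint_union_left, Set.disjoint_union_right,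
        Set.disjoint_union_right]
      exact ⟨⟨hAB, hGA.symm⟩, hFB.mono_left subset_closure, hGF.symm⟩
  obtain ⟨U, V, hU, hV, hAU, hBV, hUV⟩ := hsep
  refine ⟨U, V, hU, hV, hUV, fun x hx => hAU (Or.inl hx), fun x hx => hBV (Or.inl hx), ?_⟩
  intro x hx
  by_cases h : (⟨x, hx⟩ : Z) ∈ E
  · exact Or.inl (hAU (Or.inr ⟨⟨x, hx⟩, h, rfl⟩))
  · exact Or.inr (hBV (Or.inr ⟨⟨x, hx⟩, h, rfl⟩))

/-- A space embedded into `ℝ^N` so that all coordinates avoid a dense set `D` has a clopen base,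
given by the boxes with corners in `D`. -/
lemma exists_clopen_of_avoid {T : Type*} [TopologicalSpace T] {N : ℕ} (g : T → Fin N → ℝ)
    (hg : IsInducing g) (D : Set ℝ) (hD : Dense D) (hgD : ∀ x i, g x i ∉ D)
    (x : T) (U : Set T) (hU : U ∈ 𝓝 x) : ∃ C, IsClopen C ∧ x ∈ C ∧ C ⊆ U := by
  rw [hg.nhds_eq_comap, mem_comap] at hU
  obtain ⟨W, hW, hWU⟩ := hU
  obtain ⟨ε, hε, hball⟩ := Metric.mem_nhds_iff.mp hW
  choose p hpD hp using fun i => hD.exists_between (show g x i - ε / 2 < g x i by linarith)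
  choose q hqD hq using fun i => hD.exists_between (show g x i < g x i + ε / 2 by linarith)
  have e : g ⁻¹' (Set.pi univ fun i => Ioo (p i) (q i)) =
      g ⁻¹' (Set.pi univ fun i => Icc (p i) (q i)) := by
    ext y
    simp only [mem_preimage, Set.mem_pi, mem_univ, true_imp_iff, mem_Ioo, mem_Icc]
    refine forall_congr' fun i => ⟨fun h => ⟨h.1.le, h.2.le⟩, fun h => ⟨?_, ?_⟩⟩
    · exact lt_of_le_of_ne h.1 fun e => hgD y i (e ▸ hpD i)
    · exact lt_of_le_of_ne h.2 fun e => hgD y i (e ▸ hqD i)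
  refine ⟨g ⁻¹' (Set.pi univ fun i => Ioo (p i) (q i)), ⟨?_, ?_⟩, ?_, ?_⟩
  · rw [e]
    exact (isClosed_set_pi fun i _ => isClosed_Icc).preimage hg.continuous
  · exact (isOpen_set_pi finite_univ fun i _ => isOpen_Ioo).preimage hg.continuous
  · intro i _
    exact ⟨(hp i).2, (hq i).1⟩
  · intro y hy
    refine hWU (hball ?_)
    rw [Metric.mem_ball]
    refine lt_of_le_of_lt ((dist_pi_le_iff (by positivity)).mpr fun i => ?_) (half_lt_self hε)
    have h1 := hy i (mem_univ i)
    have h2 := hp i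
    have h3 := hq i
    rw [Real.dist_eq, abs_le]
    constructor <;> linarith [h1.1, h1.2, h2.1, h3.2]

/-- Pairwise disjoint dense subsets of the line: the translates of `ℚ` by multiples of `√2`. -/
def denseSet (j : ℕ) : Set ℝ := range fun q : ℚ => (q : ℝ) + j * √2

lemma dense_denseSet (j : ℕ) : Dense (denseSet j) := by
  have h : DenseRange ((Homeomorph.addRight ((j : ℝ) * √2)) ∘ ((↑) : ℚ → ℝ)) :=
    (Homeomorph.addRight ((j : ℝ) * √2)).surjective.denseRange.comp Rat.denseRange_cast
      (Homeomorph.addRight ((j : ℝ) * √2)).continuous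
  exact h

lemma denseSet_disjoint {j k : ℕ} {x : ℝ} (hj : x ∈ denseSet j) (hk : x ∈ denseSet k) :
    j = k := by
  obtain ⟨q, rfl⟩ := hj
  obtain ⟨r, hr⟩ := hk
  by_contra hne
  have hne' : ((j : ℤ) - k : ℤ) ≠ 0 := by omega
  have := irrational_sqrt_two.intCast_mul hne'
  refine this ⟨r - q, ?_⟩
  push_cast
  simp only at hr
  linarith

/-- `ℝ^N` is the union of the `N + 1` sets of points with all coordinates outside `denseSet j`,
`j ≤ N`, since each of the `N` coordinates lies in at most one `denseSet j`. -/
lemma exists_avoid {N : ℕ} (v : Fin N → ℝ) : ∃ j < N + 1, ∀ i, v i ∉ denseSet j := by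
  by_contra! h
  choose c hc using fun j : Fin (N + 1) => h j j.2
  obtain ⟨a, b, hab, hcab⟩ := Fintype.exists_ne_map_eq_of_card_lt c (by simp)
  exact hab (Fin.ext (denseSet_disjoint (hc a) (hcab ▸ hc b)))

/-- If `X` contains no closed set that some coordinate projection maps onto `[0,1]`, then the
complement of `X` does not embed into `ℝ^N`. -/
lemma not_embedding (X : Set (ℕ → unitInterval))
    (hX : ∀ L : Set (ℕ → unitInterval), IsClosed L → ∀ n, (∀ t, ∃ x ∈ L, x n = t) →
      ∃ x ∈ L, x ∉ X) (N : ℕ) (f : ↥Xᶜ → (Fin N → ℝ)) (hf : IsEmbedding f) : False := by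
  have hpart : ∀ j : ℕ, ∃ U V : Set (ℕ → unitInterval), IsOpen U ∧ IsOpen V ∧ Disjoint U V ∧
      {x | x j = 0} ⊆ U ∧ {x | x j = 1} ⊆ V ∧
      {x | ∃ h : x ∈ Xᶜ, ∀ i, f ⟨x, h⟩ i ∉ denseSet j} ⊆ U ∪ V := by
    intro j
    refine exists_partition _ _ _ ?_ (isClosed_eq (continuous_apply j) continuous_const)
      (isClosed_eq (continuous_apply j) continuous_const) ?_
    · set Z := {x | ∃ h : x ∈ Xᶜ, ∀ i, f ⟨x, h⟩ i ∉ denseSet j} with hZ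
      have hZX : Z ⊆ Xᶜ := fun x hx => hx.1
      refine exists_clopen_of_avoid (f ∘ Set.inclusion hZX)
        (hf.isInducing.comp (IsEmbedding.inclusion hZX).isInducing) _ (dense_denseSet j) ?_
      rintro ⟨x, hx, hx'⟩ i
      exact hx' i
    · rw [Set.disjoint_left]
      intro x hx hx'
      exact zero_ne_one (hx.symm.trans hx')
  choose U V hU hV hUV h0 h1 hZ using hpart
  have hclosed : IsClosed (⋂ j ∈ Iio (N + 1), ((U j)ᶜ ∩ (V j)ᶜ)) :=
    isClosed_biInter fun j _ => (hU j).isClosed_compl.inter (hV j).isClosed_compl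
  obtain ⟨x, hxL, hxX⟩ := hX _ hclosed (N + 1) fun t => by
    obtain ⟨x, hx, hx'⟩ := miranda (N + 1) U V hU hV hUV (fun j x h => h0 j h)
      (fun j x h => h1 j h) (fun _ => t)
    exact ⟨x, mem_iInter₂.mpr fun j hj => hx' j hj, hx _ le_rfl⟩
  obtain ⟨j, hj, hjx⟩ := exists_avoid (f ⟨x, hxX⟩)
  have hxj := mem_iInter₂.mp hxL j hj
  rcases hZ j ⟨hxX, hjx⟩ with h | h
  · exact hxj.1 h
  · exact hxj.2 h

/-! ### Choosing the totally disconnected sets -/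

/-- A family of sets, each of cardinality at least that of the index set, admits an injective
choice function. -/
lemma exists_injective_choice {ι P : Type} (A : ι → Set P) (h : ∀ i, #ι ≤ #(A i)) :
    ∃ g : ι → P, Function.Injective g ∧ ∀ i, g i ∈ A i := by
  -- Well-order `ι` so that every proper initial segment has smaller cardinality.
  obtain ⟨r, hr, hord⟩ := Cardinal.exists_ord_eq ι
  have hne : ∀ (i : ι) (g : ∀ j, r j i → P),
      ∃ x ∈ A i, ∀ j (hj : r j i), g j hj ≠ x := by
    intro i g
    by_contra! hcon
    have h1 : A i ⊆ range fun j : {j // r j i} => g j.1 j.2 := by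
      intro x hx
      obtain ⟨j, hj, e⟩ := hcon x hx
      exact ⟨⟨j, hj⟩, e⟩
    have h2 : #{j // r j i} < #ι := Cardinal.card_typein_lt (r := r) i hord
    exact absurd ((h i).trans ((Cardinal.mk_le_mk_of_subset h1).trans Cardinal.mk_range_le))
      (not_le.mpr h2)
  choose c hcA hc using hne
  let g : ι → P := hr.wf.fix c
  have hg : ∀ i, g i = c i fun j _ => g j := fun i => hr.wf.fix_eq c i
  have hlt : ∀ i j, r j i → g j ≠ g i := by
    intro i j hj
    rw [hg i]
    exact hc i (fun j _ => g j) j hj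
  refine ⟨g, fun i j hij => ?_, fun i => ?_⟩
  · rcases trichotomous_of r i j with h | h | h
    · exact absurd hij (hlt j i h)
    · exact h
    · exact absurd hij.symm (hlt i j h)
  · rw [hg i]
    exact hcA i _

lemma mk_closeds_le {Q : Type} [TopologicalSpace Q] [SecondCountableTopology Q] :
    #(TopologicalSpace.Closeds Q) ≤ 𝔠 := by
  let B := TopologicalSpace.countableBasis Q
  have hinj : Function.Injective
      (fun (C : TopologicalSpace.Closeds Q) => {b : B | Disjoint (b : Set Q) (C : Set Q)}) := by
    have key : ∀ C D : TopologicalSpace.Closeds Q,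
        {b : B | Disjoint (b : Set Q) (C : Set Q)} = {b : B | Disjoint (b : Set Q) (D : Set Q)} →
        (C : Set Q) ⊆ D := by
      intro C D h x hx
      by_contra hxD
      obtain ⟨b, hb, hxb, hbD⟩ :=
        (TopologicalSpace.isBasis_countableBasis Q).exists_subset_of_mem_open (show x ∈ (D : Set Q)ᶜ from hxD) D.isClosed.isOpen_compl
      have : (⟨b, hb⟩ : B) ∈ {b : B | Disjoint (b : Set Q) (D : Set Q)} :=
        Set.disjoint_left.mpr fun y hy => hbD hy
      rw [← h] at this
      exact Set.disjoint_left.mp this hxb hx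
    intro C D h
    exact SetLike.coe_injective ((key C D h).antisymm (key D C h.symm))
  refine (Cardinal.mk_le_of_injective hinj).trans ?_
  rw [Cardinal.mk_set, ← Cardinal.two_power_aleph0]
  have : #B ≤ ℵ₀ := Cardinal.mk_le_aleph0_iff.mpr
    (TopologicalSpace.countable_countableBasis Q).to_subtype
  exact Cardinal.power_le_power_left two_ne_zero this

lemma mk_irrational_Ioo {p q : ℝ} (h : p < q) : #{t : ℝ | Irrational t ∧ t ∈ Ioo p q} = 𝔠 := by
  apply le_antisymm
  · rw [← Cardinal.mk_real]
    exact Cardinal.mk_set_le _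
  · have h1 : Ioo p q ⊆ {t : ℝ | Irrational t ∧ t ∈ Ioo p q} ∪ range ((↑) : ℚ → ℝ) := by
      intro t ht
      by_cases hi : Irrational t
      · exact Or.inl ⟨hi, ht⟩
      · exact Or.inr (not_not.mp hi)
    by_contra! hlt
    have h2 := (Cardinal.mk_le_mk_of_subset h1).trans (Cardinal.mk_union_le _ _)
    rw [Cardinal.mk_Ioo_real h] at h2
    refine absurd h2 (not_le.mpr (Cardinal.add_lt_of_lt Cardinal.aleph0_le_continuum hlt ?_))
    exact lt_of_le_of_lt (Cardinal.mk_le_aleph0_iff.mpr (countable_range _).to_subtype)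
      Cardinal.aleph0_lt_continuum

/-- A set of points of the cube with distinct, irrational `i`-th coordinates is totally
disconnected. -/
lemma isTotallyDisconnected_of_coord (X : Set (ℕ → unitInterval)) (i : ℕ)
    (hirr : ∀ x ∈ X, Irrational (x i : ℝ))
    (hinj : ∀ x ∈ X, ∀ y ∈ X, (x i : ℝ) = y i → x = y) : IsTotallyDisconnected X := by
  intro S hSX hS x hx y hy
  have hc : IsPreconnected ((fun z : ℕ → unitInterval => (z i : ℝ)) '' S) :=
    hS.image _ (continuous_subtype_val.comp (continuous_apply i)).continuousOn
  have key : ∀ a ∈ S, ∀ b ∈ S, ¬ ((a i : ℝ) < b i) := by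
    intro a ha b hb hab
    obtain ⟨r, h1, h2⟩ := exists_rat_btwn hab
    obtain ⟨z, hz, hzr⟩ := hc.Icc_subset ⟨a, ha, rfl⟩ ⟨b, hb, rfl⟩ ⟨h1.le, h2.le⟩
    exact hirr z (hSX hz) ⟨r, hzr.symm⟩
  exact hinj x (hSX hx) y (hSX hy)
    (le_antisymm (not_lt.mp (key y hy x hx)) (not_lt.mp (key x hx y hy)))

/-- The closed set `C` projects onto a set containing the interval `(p, q)` in the coordinate
`i`. -/
def Crosses (C : TopologicalSpace.Closeds (ℕ → unitInterval)) (i : ℕ) (p q : ℚ) : Prop :=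
  p < q ∧ ∀ t : ℝ, t ∈ Ioo (p : ℝ) q → ∃ x ∈ C, (x i : ℝ) = t

/-- Countably many totally disconnected sets such that every closed set crossing an interval
contains a point of one of them, while their union contains no closed set that some coordinate
projection maps onto `[0,1]`. -/
lemma exists_family : ∃ X : ℕ × ℚ × ℚ → Set (ℕ → unitInterval),
    (∀ a, IsTotallyDisconnected (X a)) ∧
    (∀ C i p q, Crosses C i p q → ∃ x ∈ C, x ∈ X (i, p, q)) ∧
    (∀ L : Set (ℕ → unitInterval), IsClosed L → ∀ n, (∀ t, ∃ x ∈ L, x n = t) →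
      ∃ x ∈ L, x ∉ ⋃ a, X a) := by
  classical
  let K := TopologicalSpace.Closeds (ℕ → unitInterval)
  have hK : #K ≤ 𝔠 := mk_closeds_le
  -- Each closed set is assigned continuum many private irrational numbers in each interval.
  have hτ : ∀ p q : ℚ, p < q → ∃ τ : K × ℝ → ℝ, Function.Injective τ ∧
      ∀ a, Irrational (τ a) ∧ τ a ∈ Ioo (p : ℝ) q := by
    intro p q hpq
    have h : #(K × ℝ) ≤ #{t : ℝ | Irrational t ∧ t ∈ Ioo (p : ℝ) q} := by
      rw [mk_irrational_Ioo (by exact_mod_cast hpq), Cardinal.mk_prod, Cardinal.lift_id,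
        Cardinal.lift_id, Cardinal.mk_real]
      exact (mul_le_mul_left hK _).trans (Cardinal.continuum_mul_self).le
    obtain ⟨e⟩ := h
    exact ⟨fun a => e a, fun a b hab => e.injective (Subtype.ext hab), fun a => (e a).2⟩
  choose! τ hτinj hτ using hτ
  let A : K ⊕ (K × ℕ × ℚ × ℚ) → Set (ℕ → unitInterval) := fun a => match a with
    | Sum.inl L => if ∃ n, ∀ t, ∃ x ∈ L, x n = t then (L : Set _) else univ
    | Sum.inr (C, i, p, q) => if Crosses C i p q then
        {x | x ∈ C ∧ ∃ s : ℝ, (x i : ℝ) = τ p q (C, s)} else univ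
  have hI : 𝔠 ≤ #unitInterval := (Cardinal.mk_Icc_real (zero_lt_one' ℝ)).ge
  have huniv : 𝔠 ≤ #(univ : Set (ℕ → unitInterval)) := by
    rw [Cardinal.mk_univ]
    exact hI.trans (Cardinal.mk_le_of_injective (f := fun t : unitInterval => fun _ : ℕ => t)
      fun s t h => congrFun h 0)
  have hA : ∀ a, 𝔠 ≤ #(A a) := by
    rintro (L | ⟨C, i, p, q⟩)
    · simp only [A]
      split_ifs with h
      · obtain ⟨n, hn⟩ := h
        choose x hxL hx using hn
        refine hI.trans (Cardinal.mk_le_of_injective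
          (f := fun t => (⟨x t, hxL t⟩ : (L : Set (ℕ → unitInterval)))) fun s t hst => ?_)
        have e : x s = x t := congrArg Subtype.val hst
        rw [← hx s, ← hx t, e]
      · exact huniv
    · simp only [A]
      split_ifs with h
      · choose x hxC hx using fun s : ℝ => h.2 (τ p q (C, s)) (hτ p q h.1 _).2
        rw [← Cardinal.mk_real]
        refine Cardinal.mk_le_of_injective
          (f := fun s => (⟨x s, hxC s, s, hx s⟩ :
            {x | x ∈ C ∧ ∃ s : ℝ, (x i : ℝ) = τ p q (C, s)})) fun s t hst => ?_
        have e : x s = x t := congrArg Subtype.val hst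
        have := hτinj p q h.1 ((hx s).symm.trans ((by rw [e] : (x s i : ℝ) = x t i).trans (hx t)))
        exact (Prod.ext_iff.mp this).2
      · exact huniv
  have hι : #(K ⊕ (K × ℕ × ℚ × ℚ)) ≤ 𝔠 := by
    have h1 : #(ℕ × ℚ × ℚ) ≤ 𝔠 :=
      (Cardinal.mk_le_aleph0_iff.mpr inferInstance).trans Cardinal.aleph0_le_continuum
    have h2 : #(K × ℕ × ℚ × ℚ) ≤ 𝔠 := by
      rw [Cardinal.mk_prod, Cardinal.lift_id, Cardinal.lift_id]
      exact (mul_le_mul' hK h1).trans Cardinal.continuum_mul_self.le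
    rw [Cardinal.mk_sum, Cardinal.lift_id, Cardinal.lift_id]
    exact (add_le_add hK h2).trans Cardinal.continuum_add_self.le
  obtain ⟨g, hginj, hg⟩ := exists_injective_choice A fun a => hι.trans (hA a)
  have hgC : ∀ C i p q, Crosses C i p q → g (Sum.inr (C, i, p, q)) ∈ C ∧
      ∃ s : ℝ, (g (Sum.inr (C, i, p, q)) i : ℝ) = τ p q (C, s) := by
    intro C i p q h
    have := hg (Sum.inr (C, i, p, q))
    simp only [A, if_pos h] at this
    exact this
  refine ⟨fun a => {x | ∃ C, Crosses C a.1 a.2.1 a.2.2 ∧ g (Sum.inr (C, a)) = x}, ?_, ?_, ?_⟩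
  · rintro ⟨i, p, q⟩
    refine isTotallyDisconnected_of_coord _ i ?_ ?_
    · rintro _ ⟨C, hC, rfl⟩
      obtain ⟨-, s, hs⟩ := hgC C i p q hC
      rw [hs]
      exact (hτ p q hC.1 _).1
    · rintro _ ⟨C, hC, rfl⟩ _ ⟨D, hD, rfl⟩ hCD
      obtain ⟨-, s, hs⟩ := hgC C i p q hC
      obtain ⟨-, t, ht⟩ := hgC D i p q hD
      have := hτinj p q hC.1 (hs.symm.trans (hCD.trans ht))
      obtain rfl : C = D := (Prod.ext_iff.mp this).1
      rfl
  · intro C i p q h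
    exact ⟨_, (hgC C i p q h).1, C, h, rfl⟩
  · intro L hL n hn
    have hgL : g (Sum.inl ⟨L, hL⟩) ∈ L := by
      have := hg (Sum.inl ⟨L, hL⟩)
      simp only [A] at this
      rw [if_pos ⟨n, hn⟩] at this
      exact this
    refine ⟨_, hgL, fun hmem => ?_⟩
    obtain ⟨a, C, -, hC⟩ := mem_iUnion.mp hmem
    exact Sum.inr_ne_inl (hginj hC)

/-- The closure of a connected set with two different points crosses some rational interval. -/
lemma exists_crosses (S : Set (ℕ → unitInterval)) (hS : IsPreconnected S) (x y : ℕ → unitInterval)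
    (hx : x ∈ S) (hy : y ∈ S) (hxy : x ≠ y) :
    ∃ i p q, Crosses ⟨closure S, isClosed_closure⟩ i p q := by
  obtain ⟨i, hi⟩ := Function.ne_iff.mp hxy
  have key : ∀ a ∈ S, ∀ b ∈ S, (a i : ℝ) < b i →
      ∃ p q, Crosses ⟨closure S, isClosed_closure⟩ i p q := by
    intro a ha b hb hab
    obtain ⟨p, hp, hpb⟩ := exists_rat_btwn hab
    obtain ⟨q, hq, hqb⟩ := exists_rat_btwn hpb
    refine ⟨p, q, by exact_mod_cast hq, fun t ht => ?_⟩
    have hc : IsPreconnected ((fun z : ℕ → unitInterval => (z i : ℝ)) '' S) :=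
      hS.image _ (continuous_subtype_val.comp (continuous_apply i)).continuousOn
    obtain ⟨z, hz, hzt⟩ := hc.Icc_subset ⟨a, ha, rfl⟩ ⟨b, hb, rfl⟩
      ⟨(hp.trans ht.1).le, (ht.2.trans hqb).le⟩
    exact ⟨z, subset_closure hz, hzt⟩
  rcases lt_or_gt_of_ne (fun e => hi (Subtype.ext e) : (x i : ℝ) ≠ y i) with h | h
  · exact ⟨i, key x hx y hy h⟩
  · exact ⟨i, key y hy x hx h⟩

end HilbertCube

/-- There is a sequence of totally disconnected subspaces of the Hilbert cube whose
complement `Y` is infinite dimensional (it embeds into no `ℝ^N`) while every compact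
subspace of `Y` is totally disconnected. -/
theorem stmt15 :
    ∃ X : ℕ → Set (ℕ → unitInterval),
      (∀ i, IsTotallyDisconnected (X i)) ∧
      (∀ K : Set (ℕ → unitInterval),
        K ⊆ (⋃ i, X i)ᶜ → IsCompact K → IsTotallyDisconnected K) ∧
      (∀ N : ℕ, ¬ ∃ f : ↥((⋃ i, X i)ᶜ) → (Fin N → ℝ), Topology.IsEmbedding f) := by
  obtain ⟨X, hdisc, hcross, hL⟩ := HilbertCube.exists_family
  obtain ⟨e, he⟩ := exists_surjective_nat (ℕ × ℚ × ℚ)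
  have hU : (⋃ i, X (e i)) = ⋃ a, X a := he.iUnion_comp X
  refine ⟨fun i => X (e i), fun i => hdisc _, ?_, ?_⟩
  · intro K hK hKc S hSK hS x hx y hy
    by_contra hxy
    obtain ⟨i, p, q, h⟩ := HilbertCube.exists_crosses S hS x y hx hy hxy
    obtain ⟨z, hzC, hzX⟩ := hcross _ i p q h
    have hzK : z ∈ K := closure_minimal hSK hKc.isClosed hzC
    refine hK hzK ?_
    rw [hU]
    exact mem_iUnion.mpr ⟨_, hzX⟩
  · rintro N ⟨f, hf⟩
    refine HilbertCube.not_embedding (⋃ i, X (e i)) ?_ N f hf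
    rw [hU]
    exact hL
end

section
/- For every sequence (H_i)_{i ∈ ℕ} of zero-dimensional subspaces of the Hilbert cube [0,1]^ℕ, there exists a nondegenerate continuum avoiding all of them: a compact connected subset A ⊆ [0,1]^ℕ containing at least two points such that A ∩ H_i = ∅ for every i ∈ ℕ. -/
open Set

/-!
Each `H i` is avoided by a partition between the two faces orthogonal to coordinate `i + 1`: since
`H i` is zero-dimensional and second countable, there are closed sets `E`, `F` covering the cube,
containing the face `x (i + 1) = 0` and the face `x (i + 1) = 1` respectively, with `E ∩ F` disjoint
from `H i` (`exists_closed_cover_avoiding`). Let `L` be the intersection of all these `E ∩ F`; it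
is compact and misses every `H i`. Coordinate `0` has been left free, and some component of `L`
joins the face `x 0 = 0` to the face `x 0 = 1`; this component is the continuum. Otherwise, as
components of a compact Hausdorff space are quasi-components, a clopen subset of `L` separates the
two faces, and it extends to a partition of the cube between them that misses `L`. This contradicts
`exists_mem_all_partitions`: partitions between the opposite faces in all coordinate directions have
a common point.

The latter is the infinite-dimensional Poincaré–Miranda theorem. By compactness it follows from a
combinatorial lemma on the grid `{0, …, k}ⁿ` (`exists_cube_both_values`), which is a form of
Sperner's lemma for the Kuhn triangulation of the grid. The parity count behind Sperner's lemma is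
`sum_simplexDet`. There the indicator of a simplex carrying all labels is the determinant modulo 2
of its incidence matrix between vertices and labels; Laplace expansion writes it as the sum of the
indicators of the facets, interior facets cancel in pairs, and the boundary facets that remain form
the same sum in one dimension less.
-/

/-! ### Sperner's lemma for the Kuhn triangulation -/

/-- The `m`-th vertex of the Kuhn simplex with least vertex `v` and order `σ`: walking from `v` to
`v + (1, …, 1)`, coordinate `i` is raised at step `σ i`. The simplex in dimension `n` has the
vertices `m = 0, …, n`. -/
def kuhnVertex {n : ℕ} (v : Fin n → ℕ) (σ : Equiv.Perm (Fin n)) (m : ℕ) : Fin n → ℕ :=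
  fun i => v i + if (σ i : ℕ) < m then 1 else 0

/-- The determinant modulo 2 of the incidence matrix between the vertices of a Kuhn simplex and the
labels `0, …, n`; it is `1` exactly when every label occurs. -/
def simplexDet {n : ℕ} (l : (Fin n → ℕ) → ℕ) (v : Fin n → ℕ) (σ : Equiv.Perm (Fin n)) : ZMod 2 :=
  Matrix.det (Matrix.of fun m c : Fin (n + 1) =>
    if l (kuhnVertex v σ m) = c then (1 : ZMod 2) else 0)

/-- The analogue of `simplexDet` for the facet opposite to the vertex `j`, with the labels
`1, …, n + 1`. -/
def facetDet {n : ℕ} (l : (Fin (n + 1) → ℕ) → ℕ) (v : Fin (n + 1) → ℕ)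
    (σ : Equiv.Perm (Fin (n + 1))) (j : Fin (n + 2)) : ZMod 2 :=
  Matrix.det (Matrix.of fun m c : Fin (n + 1) =>
    if l (kuhnVertex v σ (j.succAbove m)) = c + 1 then (1 : ZMod 2) else 0)

/-- The least vertices of the unit cubes that make up the grid `{0, …, k}ⁿ`. -/
def gridBox (n k : ℕ) : Finset (Fin n → ℕ) := Fintype.piFinset fun _ => Finset.range k

/-- Every vertex has exactly one label, so the columns of the incidence matrix add up to the
constant column `1`. Replacing column `0` by this sum and expanding along it gives the facets. -/
lemma simplexDet_eq_sum {n : ℕ} (l : (Fin (n + 1) → ℕ) → ℕ) (hl : ∀ x, l x ≤ n + 1)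
    (v : Fin (n + 1) → ℕ) (σ : Equiv.Perm (Fin (n + 1))) :
    simplexDet l v σ = ∑ j, facetDet l v σ j := by
  unfold simplexDet
  set M : Matrix (Fin (n + 2)) (Fin (n + 2)) (ZMod 2) := Matrix.of fun m c : Fin (n + 2) =>
    if l (kuhnVertex v σ m) = c then (1 : ZMod 2) else 0 with hM
  have h1 : (M.updateCol 0 (fun k => ∑ i, (1 : ZMod 2) • M k i)).det = M.det := by
    simpa using M.det_updateCol_sum 0 (fun _ => 1)
  have h2 : ∀ k, ∑ i, (1 : ZMod 2) • M k i = 1 := by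
    intro k
    have : ∀ i : Fin (n + 2), (1 : ZMod 2) • M k i =
        if (⟨l (kuhnVertex v σ k), Nat.lt_succ_of_le (hl _)⟩ : Fin (n + 2)) = i then 1 else 0 := by
      intro i
      simp [hM, Fin.ext_iff]
    rw [Finset.sum_congr rfl fun i _ => this i]
    simp
  rw [← h1, Matrix.det_succ_column_zero]
  refine Finset.sum_congr rfl fun j _ => ?_
  have h3 : ((-1 : ZMod 2)) = 1 := by decide
  rw [h3, one_pow, one_mul, Matrix.updateCol_self, h2, one_mul]
  unfold facetDet
  congr 1

lemma facetDet_eq_zero {n : ℕ} (l : (Fin (n + 1) → ℕ) → ℕ) (v : Fin (n + 1) → ℕ)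
    (σ : Equiv.Perm (Fin (n + 1))) (j : Fin (n + 2)) (c : Fin (n + 1))
    (h : ∀ m : Fin (n + 1), l (kuhnVertex v σ (j.succAbove m)) ≠ c + 1) :
    facetDet l v σ j = 0 := by
  refine Matrix.det_eq_zero_of_column_eq_zero c fun m => ?_
  simp [h m]

/-- A facet opposite to an inner vertex `j` is shared by the two simplices of the same cube whose
orders differ by the transposition of the steps `j - 1` and `j`. -/
lemma sum_facetDet_interior {n : ℕ} (l : (Fin (n + 1) → ℕ) → ℕ) (v : Fin (n + 1) → ℕ)
    (j : Fin (n + 2)) (h0 : j ≠ 0) (h1 : j ≠ Fin.last _) :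
    ∑ σ, facetDet l v σ j = 0 := by
  have hj0 : (j : ℕ) ≠ 0 := fun h => h0 (Fin.ext h)
  have hj1 : (j : ℕ) ≠ n + 1 := fun h => h1 (Fin.ext h)
  have hj2 := j.2
  let p : Fin (n + 1) := ⟨j - 1, by omega⟩
  let q : Fin (n + 1) := ⟨j, by omega⟩
  have hpq : p ≠ q := by simp [p, q, Fin.ext_iff]; omega
  refine Finset.sum_involution (fun σ _ => Equiv.swap p q * σ) ?_ ?_ ?_ ?_
  · intro σ _
    have : facetDet l v (Equiv.swap p q * σ) j = facetDet l v σ j := by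
      unfold facetDet
      congr 1
      ext m c
      have : kuhnVertex v (Equiv.swap p q * σ) (j.succAbove m) =
          kuhnVertex v σ (j.succAbove m) := by
        funext i
        have hm : ((j.succAbove m : Fin (n + 2)) : ℕ) ≠ j := fun h =>
          Fin.succAbove_ne j m (Fin.ext h)
        unfold kuhnVertex
        congr 2
        simp only [Equiv.Perm.mul_apply, Equiv.swap_apply_def, eq_iff_iff]
        split_ifs with h2 h3
        · simp only [h2, p, q]; omega
        · simp only [h3, p, q]; omega
        · rfl
      simp [this]
    rw [this]
    exact CharTwo.add_self_eq_zero _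
  · intro σ _ _ h
    have := congrArg (fun τ => τ * σ⁻¹) h
    simp only [mul_assoc, mul_inv_cancel, mul_one] at this
    exact hpq (Equiv.swap_eq_one_iff.1 this)
  · intro σ _; exact Finset.mem_univ _
  · intro σ _; simp

/-- The facet opposite to the first vertex is also the facet opposite to the last vertex of the
simplex in the adjacent cube obtained by performing step `0` at the end. -/
lemma facetDet_zero_eq_last {n : ℕ} (l : (Fin (n + 1) → ℕ) → ℕ) (v : Fin (n + 1) → ℕ)
    (σ : Equiv.Perm (Fin (n + 1))) :
    facetDet l (fun i => v i + if σ i = 0 then 1 else 0) ((finRotate (n + 1)).symm * σ) (Fin.last _) =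
      facetDet l v σ 0 := by
  unfold facetDet
  congr 1
  ext m c
  have : kuhnVertex (fun i => v i + if σ i = 0 then 1 else 0) ((finRotate (n + 1)).symm * σ)
      ((Fin.last (n + 1)).succAbove m) = kuhnVertex v σ ((0 : Fin (n + 2)).succAbove m) := by
    funext i
    obtain ⟨t, ht⟩ : ∃ t, σ i = finRotate (n + 1) t := ⟨(finRotate (n + 1)).symm (σ i), by simp⟩
    simp only [kuhnVertex, Equiv.Perm.mul_apply, ht, Equiv.symm_apply_apply]
    have hm := m.2
    by_cases h : t = Fin.last n
    · subst h
      simp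
      omega
    · have h' : (finRotate (n + 1) t : ℕ) = t + 1 := coe_finRotate_of_ne_last h
      have h'' : finRotate (n + 1) t ≠ 0 := by
        intro h3; rw [h3] at h'; simp at h'
      rw [if_neg h'', h']
      simp only [Fin.succAbove_last, Fin.succAbove_zero, Fin.val_castSucc, Fin.val_succ,
        add_lt_add_iff_right, add_zero]
  simp only [Matrix.of_apply, this]

/-- The number of Kuhn simplices carrying all labels is odd, provided that label `i + 1` does not
occur on the face `x i = 0` and only labels `≥ i + 1` occur on the face `x i = k`. -/
lemma sum_simplexDet (n k : ℕ) (hk : 0 < k) (l : (Fin n → ℕ) → ℕ) (hl : ∀ x, l x ≤ n)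
    (h0 : ∀ x, ∀ i : Fin n, x i = 0 → l x ≠ i + 1) (h1 : ∀ x, ∀ i : Fin n, x i = k → (i : ℕ) + 1 ≤ l x) :
    ∑ σ, ∑ v ∈ gridBox n k, simplexDet l v σ = 1 := by
  induction n with
  | zero =>
    have : ∀ x, l x = 0 := fun x => Nat.le_zero.1 (hl x)
    simp [gridBox, simplexDet, this, Matrix.det_unique]
  | succ n ih =>
    simp_rw [simplexDet_eq_sum l hl]
    rw [Finset.sum_comm]
    have e1 : ∀ v, ∑ σ, ∑ j, facetDet l v σ j =
        ∑ σ, (facetDet l v σ 0 + facetDet l v σ (Fin.last _)) := by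
      intro v
      rw [Finset.sum_comm, ← Finset.sum_subset (Finset.subset_univ {0, Fin.last (n + 1)})]
      · rw [Finset.sum_pair (by simp [Fin.ext_iff]), Finset.sum_add_distrib]
      · intro j _ hj
        simp only [Finset.mem_insert, Finset.mem_singleton, not_or] at hj
        exact sum_facetDet_interior l v j hj.1 hj.2
    rw [Finset.sum_congr rfl fun v _ => e1 v]
    rw [Finset.sum_comm]
    simp_rw [Finset.sum_add_distrib]
    -- A facet opposite to a last vertex either lies in a face `x i = 0` and does not carry
    -- label `i + 1`, or is the facet opposite to the first vertex in an adjacent cube.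
    have e2 : ∑ σ, ∑ v ∈ gridBox (n + 1) k, facetDet l v σ (Fin.last _) =
        ∑ σ : Equiv.Perm (Fin (n + 1)), ∑ v ∈ (gridBox (n + 1) k).filter
          (fun v => v (σ.symm 0) + 1 ≠ k), facetDet l v σ 0 := by
      rw [← Equiv.sum_comp (Equiv.mulLeft ((finRotate (n + 1)).symm))]
      refine Finset.sum_congr rfl fun σ _ => ?_
      symm
      refine Finset.sum_bij_ne_zero (fun v _ _ i => v i + if σ i = 0 then 1 else 0) ?_ ?_ ?_ ?_
      · intro v hv _
        simp only [gridBox, Finset.mem_filter, Fintype.mem_piFinset, Finset.mem_range] at hv ⊢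
        intro i
        have := hv.1 i
        split_ifs with h
        · have h2 := hv.2
          rw [← h] at h2
          simp at h2
          omega
        · omega
      · intro v _ _ w _ _ h
        funext i
        have := congrFun h i
        simpa using this
      · intro w hw hne
        have hpos : w (σ.symm 0) ≠ 0 := by
          intro hw0
          refine hne (facetDet_eq_zero _ _ _ _ (σ.symm 0) fun m => h0 _ _ ?_)
          have : ((finRotate (n + 1)).symm * σ) (σ.symm 0) = Fin.last n := by
            rw [Equiv.Perm.mul_apply, Equiv.apply_symm_apply, Equiv.symm_apply_eq]
            exact finRotate_last.symm
          have hm := m.2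
          simp only [kuhnVertex, Equiv.coe_mulLeft, this, hw0]
          simp
          omega
        have hsub : (fun i => (w i - if σ i = 0 then 1 else 0) + if σ i = 0 then 1 else 0) = w := by
          funext i
          split_ifs with h
          · have : i = σ.symm 0 := by rw [← h]; simp
            rw [this]; omega
          · rfl
        simp only [gridBox, Finset.mem_filter, Fintype.mem_piFinset, Finset.mem_range] at hw ⊢
        refine ⟨fun i => w i - if σ i = 0 then 1 else 0, ⟨fun i => ?_, ?_⟩, ?_, hsub⟩
        · have := hw i; dsimp only; omega
        · have := hw (σ.symm 0)
          simp
          omega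
        · rw [← facetDet_zero_eq_last, hsub]
          exact hne
      · intro v _ _
        exact (facetDet_zero_eq_last l v σ).symm
    rw [e2, ← Finset.sum_add_distrib]
    have e3 : ∀ σ : Equiv.Perm (Fin (n + 1)), ∑ v ∈ gridBox (n + 1) k, facetDet l v σ 0 +
        ∑ v ∈ (gridBox (n + 1) k).filter (fun v => v (σ.symm 0) + 1 ≠ k), facetDet l v σ 0 =
        ∑ v ∈ (gridBox (n + 1) k).filter (fun v => v (σ.symm 0) + 1 = k), facetDet l v σ 0 := by
      intro σ
      rw [← Finset.sum_filter_add_sum_filter_not (gridBox (n + 1) k)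
        (fun v => v (σ.symm 0) + 1 = k), add_assoc, CharTwo.add_self_eq_zero, add_zero]
    rw [Finset.sum_congr rfl fun σ _ => e3 σ]
    -- On a face `x i = k` with `i ≠ 0` label `1` does not occur.
    have e4 : ∀ (σ : Equiv.Perm (Fin (n + 1))), σ 0 ≠ 0 →
        ∑ v ∈ (gridBox (n + 1) k).filter (fun v => v (σ.symm 0) + 1 = k), facetDet l v σ 0 = 0 := by
      intro σ hσ
      refine Finset.sum_eq_zero fun v hv => facetDet_eq_zero _ _ _ _ 0 fun m => ?_
      have hv := (Finset.mem_filter.1 hv).2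
      have hp : σ.symm 0 ≠ 0 := fun h => hσ ((Equiv.symm_apply_eq _).1 h).symm
      have := h1 (kuhnVertex v σ ((0 : Fin (n + 2)).succAbove m)) (σ.symm 0) (by
        simp [kuhnVertex, hv])
      have hp' : ((σ.symm 0 : Fin (n + 1)) : ℕ) ≠ 0 := fun h => hp (Fin.ext h)
      simp only [Fin.val_zero]
      omega
    rw [← Equiv.sum_comp Equiv.Perm.decomposeFin.symm, Fintype.sum_prod_type,
      Finset.sum_eq_single_of_mem 0 (Finset.mem_univ _)]
    swap
    · intro p _ hp
      exact Finset.sum_eq_zero fun τ _ => e4 _ (by simpa using hp)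
    -- The facets left over triangulate the face `x 0 = k`, where all labels are positive.
    have hc : ∀ y : Fin n → ℕ, 1 ≤ l (Fin.cons k y : Fin (n + 1) → ℕ) := fun y => by
      simpa using h1 (Fin.cons k y : Fin (n + 1) → ℕ) 0 rfl
    rw [← ih (fun y => l (Fin.cons k y : Fin (n + 1) → ℕ) - 1)]
    · refine Finset.sum_congr rfl fun τ _ => ?_
      have hz : (Equiv.Perm.decomposeFin.symm ((0 : Fin (n + 1)), τ)).symm 0 = 0 := by
        rw [Equiv.symm_apply_eq]; simp
      rw [hz]
      symm
      refine Finset.sum_bij (fun w _ => (Fin.cons (k - 1) w : Fin (n + 1) → ℕ)) ?_ ?_ ?_ ?_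
      · intro w hw
        simp only [gridBox, Finset.mem_filter, Fintype.mem_piFinset, Finset.mem_range] at hw ⊢
        refine ⟨fun i => ?_, by simp; omega⟩
        refine Fin.cases ?_ (fun i => ?_) i
        · simp; omega
        · simpa using hw i
      · intro a _ b _ h
        exact (Fin.cons_injective2 h).2
      · intro v hv
        simp only [gridBox, Finset.mem_filter, Fintype.mem_piFinset, Finset.mem_range] at hv ⊢
        refine ⟨Fin.tail v, fun i => hv.1 _, ?_⟩
        have : k - 1 = v 0 := by omega
        rw [this, Fin.cons_self_tail]
      · intro w _
        unfold simplexDet facetDet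
        congr 1
        ext m c
        have : kuhnVertex (Fin.cons (k - 1) w : Fin (n + 1) → ℕ)
            (Equiv.Perm.decomposeFin.symm ((0 : Fin (n + 1)), τ))
            ((0 : Fin (n + 2)).succAbove m) = (Fin.cons k (kuhnVertex w τ m) : Fin (n + 1) → ℕ) := by
          funext i
          refine Fin.cases ?_ (fun i => ?_) i
          · simp [kuhnVertex]; omega
          · simp [kuhnVertex]
        have h2 := hc (kuhnVertex w τ m)
        simp only [Matrix.of_apply, this]
        congr 1
        simp only [eq_iff_iff]
        omega
    · intro x; have := hl (Fin.cons k x : Fin (n + 1) → ℕ); omega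
    · intro x i hx
      have := h0 (Fin.cons k x : Fin (n + 1) → ℕ) i.succ (by simpa using hx)
      have := hc x
      simp at *
      omega
    · intro x i hx
      have := h1 (Fin.cons k x : Fin (n + 1) → ℕ) i.succ (by simpa using hx)
      simp at *
      omega

/-- If each `a i` fails on the face `x i = 0` and holds on the face `x i = k`, then some unit cube
has, for each `i`, vertices where `a i` holds and vertices where it fails; moreover one vertex
serves for all failures. -/
lemma exists_cube_both_values (n k : ℕ) (hk : 0 < k) (a : Fin n → (Fin n → ℕ) → Prop)
    (h0 : ∀ i x, x i = 0 → ¬ a i x) (h1 : ∀ i x, x i = k → a i x) :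
    ∃ v : Fin n → ℕ,
      (∃ p : Fin n → ℕ, (∀ j, v j ≤ p j ∧ p j ≤ v j + 1) ∧ ∀ i, ¬ a i p) ∧
      ∀ i, ∃ q : Fin n → ℕ, (∀ j, v j ≤ q j ∧ q j ≤ v j + 1) ∧ a i q := by
  classical
  -- `l x` is one more than the largest `i` with `a i x`, and `0` if there is none.
  let l : (Fin n → ℕ) → ℕ := fun x =>
    Finset.univ.sup fun i : Fin n => if a i x then (i : ℕ) + 1 else 0
  have hle : ∀ i x, a i x → (i : ℕ) + 1 ≤ l x := by
    intro i x h
    have := Finset.le_sup (f := fun i : Fin n => if a i x then (i : ℕ) + 1 else 0)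
      (Finset.mem_univ i)
    rwa [if_pos h] at this
  have heq : ∀ (i : Fin n) x, l x = i + 1 → a i x := by
    intro i x h
    obtain ⟨j, -, hj⟩ := Finset.exists_mem_eq_sup (Finset.univ : Finset (Fin n))
      ⟨i, Finset.mem_univ i⟩
      (fun i : Fin n => if a i x then (i : ℕ) + 1 else 0)
    change l x = _ at hj
    split_ifs at hj with hj2
    · have : i = j := Fin.ext (by omega)
      rwa [this]
    · omega
  have hsum := sum_simplexDet n k hk l
    (fun x => Finset.sup_le fun i _ => by split_ifs <;> omega)
    (fun x i hx h => h0 i x hx (heq i x h)) (fun x i hx => hle i x (h1 i x hx))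
  obtain ⟨σ, -, hσ⟩ := Finset.exists_ne_zero_of_sum_ne_zero (hsum ▸ one_ne_zero)
  obtain ⟨v, -, hv⟩ := Finset.exists_ne_zero_of_sum_ne_zero hσ
  have hsurj : ∀ c : Fin (n + 1), ∃ m : ℕ, l (kuhnVertex v σ m) = c := by
    intro c
    by_contra! hc
    exact hv (Matrix.det_eq_zero_of_column_eq_zero c fun m => by simp [hc m])
  have hvert : ∀ m j, v j ≤ kuhnVertex v σ m j ∧ kuhnVertex v σ m j ≤ v j + 1 := by
    intro m j
    unfold kuhnVertex
    split_ifs <;> omega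
  refine ⟨v, ?_, fun i => ?_⟩
  · obtain ⟨m, hm⟩ := hsurj 0
    refine ⟨_, hvert m, fun i hi => ?_⟩
    have := hle i _ hi
    simp at hm
    omega
  · obtain ⟨m, hm⟩ := hsurj i.succ
    exact ⟨_, hvert m, heq i _ (by simpa using hm)⟩

/-! ### Partitions between opposite faces of the Hilbert cube -/

open Filter Topology in
/-- The Poincaré–Miranda theorem for the Hilbert cube, in terms of closed covers: partitions between
the opposite faces in all coordinate directions have a common point. -/
theorem exists_mem_all_partitions (E F : ℕ → Set (ℕ → unitInterval))
    (hE : ∀ i, IsClosed (E i)) (hF : ∀ i, IsClosed (F i)) (hEF : ∀ i, E i ∪ F i = univ)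
    (h0 : ∀ i x, x i = 0 → x ∈ E i) (h1 : ∀ i x, x i = 1 → x ∈ F i) :
    ∃ x, ∀ i, x ∈ E i ∩ F i := by
  -- The grid of mesh `1 / (k + 1)` in the first `k + 1` coordinates yields points of the `E i` and
  -- the `F i`, `i ≤ k`, at coordinatewise distance at most the mesh.
  have key : ∀ k : ℕ, ∃ (P : ℕ → unitInterval) (Q : ℕ → ℕ → unitInterval),
      (∀ i ≤ k, P ∈ E i ∧ Q i ∈ F i ∧ ∀ j, dist (P j) (Q i j) ≤ 1 / ((k : ℝ) + 1)) := by
    intro k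
    let emb : (Fin (k + 1) → ℕ) → ℕ → unitInterval := fun y j =>
      if h : j < k + 1 then projIcc (0 : ℝ) 1 zero_le_one ((y ⟨j, h⟩ : ℝ) / (k + 1)) else 0
    have hk : (0 : ℝ) < k + 1 := by positivity
    have hd : ∀ (v p q : Fin (k + 1) → ℕ), (∀ j, v j ≤ p j ∧ p j ≤ v j + 1) →
        (∀ j, v j ≤ q j ∧ q j ≤ v j + 1) → ∀ j, dist (emb p j) (emb q j) ≤ 1 / ((k : ℝ) + 1) := by
      intro v p q hp hq j
      by_cases h : j < k + 1
      · simp only [emb, dif_pos h]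
        refine (abs_projIcc_sub_projIcc zero_le_one).trans ?_
        rw [← sub_div, abs_div, abs_of_pos hk]
        gcongr
        obtain ⟨a1, a2⟩ := hp ⟨j, h⟩
        obtain ⟨b1, b2⟩ := hq ⟨j, h⟩
        have a1' : (v ⟨j, h⟩ : ℝ) ≤ p ⟨j, h⟩ := by exact_mod_cast a1
        have a2' : (p ⟨j, h⟩ : ℝ) ≤ v ⟨j, h⟩ + 1 := by exact_mod_cast a2
        have b1' : (v ⟨j, h⟩ : ℝ) ≤ q ⟨j, h⟩ := by exact_mod_cast b1
        have b2' : (q ⟨j, h⟩ : ℝ) ≤ v ⟨j, h⟩ + 1 := by exact_mod_cast b2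
        rw [abs_le]
        constructor <;> linarith
      · simp only [emb, dif_neg h, dist_self]
        positivity
    obtain ⟨v, ⟨p, hp, hpa⟩, hq⟩ := exists_cube_both_values (k + 1) (k + 1) k.succ_pos
      (fun i x => x i ≠ 0 ∧ (x i = k + 1 ∨ emb x ∉ E i))
      (fun i x hx h => h.1 hx) (fun i x hx => ⟨by omega, Or.inl hx⟩)
    choose q hq hqa using hq
    refine ⟨emb p, fun i => if h : i < k + 1 then emb (q ⟨i, h⟩) else 0, fun i hi => ?_⟩
    have hi' : i < k + 1 := Nat.lt_succ_of_le hi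
    simp only [dif_pos hi']
    refine ⟨?_, ?_, hd v _ _ hp (hq _)⟩
    · by_contra hn
      refine hpa ⟨i, hi'⟩ ⟨fun hz => hn (h0 i _ ?_), Or.inr hn⟩
      simp [emb, hz]
    · rcases (hqa ⟨i, hi'⟩).2 with h | h
      · refine h1 i _ ?_
        simp only [emb, dif_pos hi', h]
        push_cast
        rw [div_self hk.ne']
        exact projIcc_right zero_le_one
      · exact ((hEF i).symm ▸ mem_univ (emb (q ⟨i, hi'⟩)) : _ ∈ E i ∪ F i).resolve_left h
  choose P Q hPQ using key
  obtain ⟨x, φ, hφ, hx⟩ := CompactSpace.tendsto_subseq P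
  have hev : ∀ i, ∀ᶠ k in atTop, i ≤ φ k := fun i => hφ.tendsto_atTop.eventually_ge_atTop i
  refine ⟨x, fun i => ⟨?_, ?_⟩⟩
  · exact (hE i).mem_of_tendsto hx ((hev i).mono fun k hk => (hPQ (φ k) i hk).1)
  · have hQ : Tendsto (fun k => Q (φ k) i) atTop (𝓝 x) := by
      rw [tendsto_pi_nhds] at hx ⊢
      intro j
      refine (hx j).congr_dist ?_
      have hlim : Tendsto (fun k => 1 / ((φ k : ℝ) + 1)) atTop (𝓝 0) :=
        tendsto_one_div_add_atTop_nhds_zero_nat.comp hφ.tendsto_atTop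
      exact squeeze_zero' (Eventually.of_forall fun _ => dist_nonneg)
        ((hev i).mono fun k hk => (hPQ (φ k) i hk).2.2 j) hlim
    exact (hF i).mem_of_tendsto hQ ((hev i).mono fun k hk => (hPQ (φ k) i hk).2.1)

/-! ### Separation by clopen sets and partitions avoiding a zero-dimensional set -/

/-- Countably many of the given clopen sets cover the space; made disjoint, those which meet `C`
form the clopen set sought. -/
lemma exists_isClopen_separating {X : Type*} [TopologicalSpace X] [SecondCountableTopology X]
    (C D : Set X) (h : ∀ x, ∃ U, IsClopen U ∧ x ∈ U ∧ (Disjoint U C ∨ Disjoint U D)) :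
    ∃ W, IsClopen W ∧ C ⊆ W ∧ Disjoint W D := by
  rcases isEmpty_or_nonempty X with hX | hX
  · exact ⟨∅, isClopen_empty, fun x => (hX.false x).elim, by simp⟩
  choose U hU hxU hCD using h
  obtain ⟨s, hs, hsU⟩ :=
    TopologicalSpace.countable_cover_nhds fun x => (hU x).isOpen.mem_nhds (hxU x)
  have hsne : s.Nonempty := by
    rw [nonempty_iff_ne_empty]
    rintro rfl
    rw [biUnion_empty] at hsU
    exact empty_ne_univ hsU
  obtain ⟨f, rfl⟩ := hs.exists_eq_range hsne
  let V : ℕ → Set X := disjointed fun n => U (f n)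
  have hV : ∀ n, IsClopen (V n) := by
    intro n
    refine disjointedRec (p := IsClopen) (fun t i ht => ht.diff (hU _)) (hU _)
  have hVU : ⋃ n, V n = univ := by
    rw [iUnion_disjointed]
    simpa using hsU
  have hVd : Pairwise (Function.onFun Disjoint V) := disjoint_disjointed _
  have hcompl : (⋃ n ∈ {n | ¬ Disjoint (V n) C}, V n)ᶜ = ⋃ n ∈ {n | Disjoint (V n) C}, V n := by
    ext x
    obtain ⟨n, hn⟩ := mem_iUnion.1 (hVU.symm ▸ mem_univ x : x ∈ ⋃ n, V n)
    have huniq : ∀ m, x ∈ V m → m = n := fun m hm => by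
      by_contra hne
      exact (Set.disjoint_left.1 (hVd hne) hm) hn
    simp only [mem_compl_iff, mem_iUnion, mem_ofPred_eq, not_exists]
    constructor
    · intro h
      by_cases hc : Disjoint (V n) C
      · exact ⟨n, hc, hn⟩
      · exact (h n hc hn).elim
    · rintro ⟨m, hm, hxm⟩ m' hm' hxm'
      rw [huniq m hxm] at hm
      rw [huniq m' hxm'] at hm'
      exact hm' hm
  refine ⟨⋃ n ∈ {n | ¬ Disjoint (V n) C}, V n, ⟨?_, ?_⟩, ?_, ?_⟩
  · rw [← isOpen_compl_iff, hcompl]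
    exact isOpen_biUnion fun n _ => (hV n).isOpen
  · exact isOpen_biUnion fun n _ => (hV n).isOpen
  · intro x hx
    obtain ⟨n, hn⟩ := mem_iUnion.1 (hVU.symm ▸ mem_univ x : x ∈ ⋃ n, V n)
    exact mem_biUnion (show n ∈ {n | ¬ Disjoint (V n) C} from
      fun hd => Set.disjoint_left.1 hd hn hx) hn
  · rw [Set.disjoint_iUnion₂_left]
    intro n hn
    have hsub : V n ⊆ U (f n) := disjointed_subset _ n
    rcases hCD (f n) with h | h
    · exact (hn (h.mono_left hsub)).elim
    · exact h.mono_left hsub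

/-- Separated sets `P` and `R` have a partition between them that misses both. The partition is
`E ∩ F`, where `E` and `F` are the complements of disjoint open sets around `R` and `P`. -/
lemma exists_closed_cover_of_separated {X : Type*} [TopologicalSpace X] [CompletelyNormalSpace X]
    {P R : Set X} (h1 : Disjoint (closure P) R) (h2 : Disjoint P (closure R)) :
    ∃ E F : Set X, IsClosed E ∧ IsClosed F ∧ E ∪ F = univ ∧ P ⊆ E ∧ R ⊆ F ∧
      Disjoint (E ∩ F) (P ∪ R) := by
  obtain ⟨G, G', hG, hG', hPG, hRG, hd⟩ :=
    separatedNhds_iff_disjoint.2 (CompletelyNormalSpace.completely_normal h1 h2)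
  refine ⟨G'ᶜ, Gᶜ, hG'.isClosed_compl, hG.isClosed_compl, ?_, ?_, ?_, ?_⟩
  · rw [← compl_inter, inter_comm, hd.inter_eq, compl_empty]
  · exact hPG.trans hd.subset_compl_right
  · exact hRG.trans hd.subset_compl_left
  · rw [Set.disjoint_left]
    rintro x ⟨hx1, hx2⟩ (hx | hx)
    · exact hx2 (hPG hx)
    · exact hx1 (hRG hx)

/-- A zero-dimensional set `H` can be avoided by a partition between disjoint closed sets `A` and
`B`: split `H` by a relatively clopen set into two parts which, together with `A` and `B`, are
separated. -/
lemma exists_closed_cover_avoiding {X : Type*} [TopologicalSpace X] [CompletelyNormalSpace X]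
    [SecondCountableTopology X] {A B H : Set X} (hA : IsClosed A) (hB : IsClosed B)
    (hAB : Disjoint A B)
    (hH : ∃ b : Set (Set ↥H), TopologicalSpace.IsTopologicalBasis b ∧ ∀ s ∈ b, IsClopen s) :
    ∃ E F : Set X, IsClosed E ∧ IsClosed F ∧ E ∪ F = univ ∧ A ⊆ E ∧ B ⊆ F ∧
      Disjoint (E ∩ F) H := by
  obtain ⟨b, hb, hbc⟩ := hH
  obtain ⟨U, hU, hAU, hUB⟩ := normal_exists_closure_subset hA hB.isOpen_compl hAB.subset_compl_right
  obtain ⟨V, hV, hBV, hVU⟩ := normal_exists_closure_subset hB isClosed_closure.isOpen_compl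
    (subset_compl_comm.1 hUB)
  have hUV : Disjoint (closure U) (closure V) := (subset_compl_iff_disjoint_left.1 hVU)
  obtain ⟨W, hW, hCW, hWD⟩ := exists_isClopen_separating
    ((↑) ⁻¹' closure U : Set H) ((↑) ⁻¹' closure V : Set H) (by
      have aux : ∀ (T : Set X), IsClosed T → ∀ x : H, (x : X) ∉ T →
          ∃ S, IsClopen S ∧ x ∈ S ∧ Disjoint S ((↑) ⁻¹' T : Set H) := by
        intro T hT x hx
        obtain ⟨S, hS, hxS, hST⟩ := hb.exists_subset_of_mem_open (a := x)
          (u := (((↑) : H → X) ⁻¹' T)ᶜ) hx (hT.preimage continuous_subtype_val).isOpen_compl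
        exact ⟨S, hbc S hS, hxS, subset_compl_iff_disjoint_right.1 hST⟩
      intro x
      by_cases hx : (x : X) ∈ closure U
      · obtain ⟨S, h1, h2, h3⟩ := aux _ isClosed_closure x (Set.disjoint_left.1 hUV hx)
        exact ⟨S, h1, h2, Or.inr h3⟩
      · obtain ⟨S, h1, h2, h3⟩ := aux _ isClosed_closure x hx
        exact ⟨S, h1, h2, Or.inl h3⟩)
  -- a clopen subset of `H` and its complement in `H` are separated in `X`
  have hcl : ∀ S : Set H, IsClosed S → Disjoint (closure ((↑) '' S : Set X)) ((↑) '' Sᶜ) := by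
    intro S hS
    rw [Set.disjoint_right]
    rintro _ ⟨x, hx, rfl⟩ hxc
    exact hx (by rwa [← closure_subtype, hS.closure_eq] at hxc)
  have hfar : ∀ (S : Set H) (O T : Set X), IsOpen O → T ⊆ O →
      Disjoint S ((↑) ⁻¹' closure O) → Disjoint (closure ((↑) '' S : Set X)) T := by
    intro S O T hO hTO hd
    refine Disjoint.mono_right hTO (Disjoint.closure_left ?_ hO)
    rw [Set.disjoint_left]
    rintro _ ⟨x, hx, rfl⟩ hxO
    exact Set.disjoint_left.1 hd hx (subset_closure hxO)
  have hWB : Disjoint (closure ((↑) '' W : Set X)) B := hfar W V B hV hBV hWD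
  have hWA : Disjoint (closure ((↑) '' Wᶜ : Set X)) A :=
    hfar Wᶜ U A hU hAU (disjoint_compl_left_iff_subset.2 hCW)
  have hc1 := hcl W hW.isClosed
  have hc2 := hcl Wᶜ hW.compl.isClosed
  rw [compl_compl] at hc2
  obtain ⟨E, F, hE, hF, hEF, hPE, hRF, hd⟩ := exists_closed_cover_of_separated
    (P := (↑) '' W ∪ A) (R := (↑) '' Wᶜ ∪ B)
    (by
      rw [closure_union, hA.closure_eq]
      refine Disjoint.union_left (Disjoint.union_right hc1 hWB) (Disjoint.union_right ?_ hAB)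
      exact (hWA.mono_left subset_closure).symm)
    (by
      rw [closure_union, hB.closure_eq]
      refine Disjoint.union_left (Disjoint.union_right hc2.symm ?_)
        (Disjoint.union_right hWA.symm hAB)
      exact hWB.mono_left subset_closure)
  refine ⟨E, F, hE, hF, hEF, subset_union_right.trans hPE, subset_union_right.trans hRF,
    hd.mono_right fun x hx => ?_⟩
  by_cases hxW : (⟨x, hx⟩ : H) ∈ W
  · exact Or.inl (Or.inl ⟨_, hxW, rfl⟩)
  · exact Or.inr (Or.inl ⟨_, hxW, rfl⟩)

/-! ### The continuum -/

/-- For any sequence of zero-dimensional subspaces of the Hilbert cube (subspaces whose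
topology has a basis of clopen sets) there is a nondegenerate continuum (a compact
connected set with at least two points) disjoint from all of them. -/
theorem stmt16 (H : ℕ → Set (ℕ → unitInterval))
    (hH : ∀ i, ∃ B : Set (Set ↥(H i)),
      TopologicalSpace.IsTopologicalBasis B ∧ ∀ s ∈ B, IsClopen s) :
    ∃ A : Set (ℕ → unitInterval),
      IsCompact A ∧ IsConnected A ∧ A.Nontrivial ∧ ∀ i, A ∩ H i = ∅ := by
  have hface : ∀ (i : ℕ) (c : unitInterval), IsClosed {x : ℕ → unitInterval | x i = c} :=
    fun i c => isClosed_eq (continuous_apply i) continuous_const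
  have hdisj : ∀ i : ℕ, Disjoint {x : ℕ → unitInterval | x i = 0} {x | x i = 1} := fun i =>
    Set.disjoint_left.2 fun x hx hx' => zero_ne_one (hx.symm.trans hx')
  choose E F hE hF hEF h0 h1 hd using fun i =>
    exists_closed_cover_avoiding (hface (i + 1) 0) (hface (i + 1) 1) (hdisj (i + 1)) (hH i)
  set L : Set (ℕ → unitInterval) := ⋂ i, E i ∩ F i with hL
  have hLc : IsClosed L := isClosed_iInter fun i => (hE i).inter (hF i)
  have hLcomp : IsCompact L := hLc.isCompact
  have : CompactSpace L := isCompact_iff_compactSpace.1 hLcomp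
  let C : Set L := {x | (x : ℕ → unitInterval) 0 = 0}
  let D : Set L := {x | (x : ℕ → unitInterval) 0 = 1}
  have hC : IsClosed C := (hface 0 0).preimage continuous_subtype_val
  have hD : IsClosed D := (hface 0 1).preimage continuous_subtype_val
  by_cases hcomp : ∃ x : L,
      (connectedComponent x ∩ C).Nonempty ∧ (connectedComponent x ∩ D).Nonempty
  · obtain ⟨x, ⟨c, hc, hc0⟩, ⟨d, hdx, hd1⟩⟩ := hcomp
    refine ⟨(↑) '' connectedComponent x, isClosed_connectedComponent.isCompact.image
      continuous_subtype_val, isConnected_connectedComponent.image _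
      continuous_subtype_val.continuousOn, ⟨c, ⟨c, hc, rfl⟩, d, ⟨d, hdx, rfl⟩, fun h => ?_⟩,
      fun i => ?_⟩
    · have h2 := congrFun h 0
      rw [show (c : ℕ → unitInterval) 0 = 0 from hc0,
        show (d : ℕ → unitInterval) 0 = 1 from hd1] at h2
      exact zero_ne_one h2
    · rw [← Set.disjoint_iff_inter_eq_empty]
      refine (hd i).mono_left ?_
      rintro _ ⟨y, -, rfl⟩
      exact mem_iInter.1 y.2 i
  exfalso
  push Not at hcomp
  obtain ⟨W, hW, hCW, hWD⟩ := exists_isClopen_separating C D (by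
    intro x
    have aux : ∀ T : Set L, IsClosed T → connectedComponent x ∩ T = ∅ →
        ∃ U, IsClopen U ∧ x ∈ U ∧ Disjoint U T := by
      intro T hT hxT
      rw [connectedComponent_eq_iInter_isClopen, inter_comm] at hxT
      have : Nonempty { s : Set L // IsClopen s ∧ x ∈ s } := ⟨⟨univ, isClopen_univ, mem_univ x⟩⟩
      obtain ⟨u, hu⟩ := hT.isCompact.elim_directed_family_closed
        (fun s : { s : Set L // IsClopen s ∧ x ∈ s } => (s : Set L))
        (fun s => s.2.1.isClosed) hxT (by
          intro s t
          exact ⟨⟨s ∩ t, s.2.1.inter t.2.1, s.2.2, t.2.2⟩, inter_subset_left, inter_subset_right⟩)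
      exact ⟨u, u.2.1, u.2.2, (Set.disjoint_iff_inter_eq_empty.2 hu).symm⟩
    by_cases hx : (connectedComponent x ∩ C).Nonempty
    · obtain ⟨U, h1, h2, h3⟩ := aux D hD (hcomp x hx)
      exact ⟨U, h1, h2, Or.inr h3⟩
    · obtain ⟨U, h1, h2, h3⟩ := aux C hC (not_nonempty_iff_eq_empty.1 hx)
      exact ⟨U, h1, h2, Or.inl h3⟩)
  have hW1 : IsClosed ((↑) '' W : Set (ℕ → unitInterval)) :=
    (hW.isClosed.isCompact.image continuous_subtype_val).isClosed
  have hW2 : IsClosed ((↑) '' Wᶜ : Set (ℕ → unitInterval)) :=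
    (hW.compl.isClosed.isCompact.image continuous_subtype_val).isClosed
  have hP := hW1.union (hface 0 0)
  have hR := hW2.union (hface 0 1)
  have hPR : Disjoint ((↑) '' W ∪ {x : ℕ → unitInterval | x 0 = 0})
      ((↑) '' Wᶜ ∪ {x : ℕ → unitInterval | x 0 = 1}) := by
    refine Disjoint.union_left (Disjoint.union_right ?_ ?_) (Disjoint.union_right ?_ (hdisj 0))
    · exact (Set.disjoint_image_iff Subtype.val_injective).2 disjoint_compl_right
    · rw [Set.disjoint_left]
      rintro _ ⟨y, hy, rfl⟩ hy1
      exact Set.disjoint_left.1 hWD hy hy1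
    · rw [Set.disjoint_right]
      rintro _ ⟨y, hy, rfl⟩ hy0
      exact hy (hCW hy0)
  obtain ⟨E₀, F₀, hE₀, hF₀, hEF₀, hPE, hRF, hd₀⟩ := exists_closed_cover_of_separated
    (hP.closure_eq.symm ▸ hPR) (hR.closure_eq.symm ▸ hPR)
  obtain ⟨x, hx⟩ := exists_mem_all_partitions (fun i => Nat.casesOn i E₀ E)
    (fun i => Nat.casesOn i F₀ F) (by rintro (_ | i) <;> [exact hE₀; exact hE i])
    (by rintro (_ | i) <;> [exact hF₀; exact hF i])
    (by rintro (_ | i) <;> [exact hEF₀; exact hEF i])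
    (by
      rintro (_ | i) x hx
      · exact hPE (Or.inr hx)
      · exact h0 i hx)
    (by
      rintro (_ | i) x hx
      · exact hRF (Or.inr hx)
      · exact h1 i hx)
  have hxL : x ∈ L := mem_iInter.2 fun i => hx (i + 1)
  refine Set.disjoint_left.1 hd₀ (hx 0) ?_
  by_cases hxW : (⟨x, hxL⟩ : L) ∈ W
  · exact Or.inl (Or.inl ⟨_, hxW, rfl⟩)
  · exact Or.inr (Or.inl ⟨_, hxW, rfl⟩)
end
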